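/- arXiv:1602.07795 — 8 statements merged into one kernel-verified Lean document; each statement's English description precedes it below -/
import Mathlib

section
/- Let P₁ = Diag(p₁) and P₂ = Diag(p₂) be diagonal N×N matrices with p₁, p₂ ≥ 0 componentwise, and let γ₁, γ₂ ∈ ℝ^N with γᵢ > 0 componentwise. Suppose the GEC second-order fixed-point relations hold for both (i,j) ∈ {(1,2),(2,1)}: γ_j = 1 ⊘ diag((Pᵢ + Diag(γᵢ))⁻¹) − γᵢ, where diag(M) denotes the vector of diagonal entries of M. Then γ₂ = p₁, γ₁ = p₂ (so p₁, p₂ > 0), and the vector η := γ₁ + γ₂ satisfies η = 1 ⊘ diag((P₁ + P₂)⁻¹). In other words, 1 ⊘ η equals the diagonal of the inverse Hessian (P₁ + P₂)⁻¹. -/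
open Matrix

/-! For diagonal matrices, inversion acts entrywise, so each fixed-point relation reads
`γⱼ = (pᵢ + γᵢ) - γᵢ = pᵢ` (`inv_inv_diagonal_add_apply`). Hence `p₁ = γ₂` and `p₂ = γ₁` are
positive, and the same computation applied to `Diag p₁ + Diag p₂` gives `p₁ + p₂ = γ₁ + γ₂`. -/

/-- Entrywise inversion of the diagonal of the inverse of `Diag a + Diag b` returns `a + b`.
Positivity makes the sum invertible as a matrix; without it `Matrix.inv` is zero as soon as one
entry of `a + b` vanishes. -/
lemma inv_inv_diagonal_add_apply {N : ℕ} (a b : Fin N → ℝ) (h : ∀ n, 0 < a n + b n) (n : Fin N) :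
    (((Matrix.diagonal a + Matrix.diagonal b)⁻¹ : Matrix (Fin N) (Fin N) ℝ) n n)⁻¹
      = a n + b n := by
  have hinv : (Matrix.diagonal a + Matrix.diagonal b)⁻¹
      = Matrix.diagonal fun i => (a i + b i)⁻¹ := by
    apply Matrix.inv_eq_right_inv
    rw [Matrix.diagonal_add, Matrix.diagonal_mul_diagonal, ← Matrix.diagonal_one]
    congr 1
    funext i
    exact mul_inv_cancel₀ (h i).ne'
  rw [hinv, Matrix.diagonal_apply_eq, inv_inv]

/-- **GEC second-order fixed point with diagonal Hessians (Theorem 2(a)).**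
Let `P₁ = Diag p₁`, `P₂ = Diag p₂` with `p₁, p₂ ≥ 0`, and `γ₁, γ₂ > 0`
componentwise.  If the GEC second-order fixed-point relations
`γⱼ = 1 ⊘ diag((Pᵢ + Diag γᵢ)⁻¹) − γᵢ` hold for both pairs `(i,j)`, then
`γ₂ = p₁`, `γ₁ = p₂`, and `η := γ₁ + γ₂` satisfies
`η = 1 ⊘ diag((P₁ + P₂)⁻¹)`. -/
theorem gec_map_curvature_diagonal
    (N : ℕ)
    (p₁ p₂ γ₁ γ₂ : Fin N → ℝ)
    (hp₁ : ∀ n, 0 ≤ p₁ n) (hp₂ : ∀ n, 0 ≤ p₂ n)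
    (hγ₁ : ∀ n, 0 < γ₁ n) (hγ₂ : ∀ n, 0 < γ₂ n)
    (hfix₁ : ∀ n, γ₂ n =
      (((Matrix.diagonal p₁ + Matrix.diagonal γ₁)⁻¹ : Matrix (Fin N) (Fin N) ℝ) n n)⁻¹ - γ₁ n)
    (hfix₂ : ∀ n, γ₁ n =
      (((Matrix.diagonal p₂ + Matrix.diagonal γ₂)⁻¹ : Matrix (Fin N) (Fin N) ℝ) n n)⁻¹ - γ₂ n) :
    γ₂ = p₁ ∧ γ₁ = p₂ ∧
    (∀ n, γ₁ n + γ₂ n =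
      (((Matrix.diagonal p₁ + Matrix.diagonal p₂)⁻¹ : Matrix (Fin N) (Fin N) ℝ) n n)⁻¹) := by
  have h₁ : ∀ n, γ₂ n = p₁ n := fun n => by
    have h := hfix₁ n
    rw [inv_inv_diagonal_add_apply p₁ γ₁ fun i => add_pos_of_nonneg_of_pos (hp₁ i) (hγ₁ i)] at h
    linarith
  have h₂ : ∀ n, γ₁ n = p₂ n := fun n => by
    have h := hfix₂ n
    rw [inv_inv_diagonal_add_apply p₂ γ₂ fun i => add_pos_of_nonneg_of_pos (hp₂ i) (hγ₂ i)] at h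
    linarith
  refine ⟨funext h₁, funext h₂, fun n => ?_⟩
  -- `p₁ = γ₂` and `p₂ = γ₁` are positive, so `Diag p₁ + Diag p₂` is invertible.
  rw [inv_inv_diagonal_add_apply p₁ p₂ fun i => by
    rw [← h₁ i, ← h₂ i]; exact add_pos (hγ₂ i) (hγ₁ i)]
  rw [h₁ n, h₂ n, add_comm]
end

section
/- Let f : ℝ^N → ℝ be twice continuously differentiable with c·I ⪯ ∇²f(x) ⪯ C·I for all x ∈ ℝ^N, where 0 < c ≤ C. Fix γ ∈ ℝ^N with γ > 0 componentwise and set Γ := Diag(γ). Then for every r ∈ ℝ^N the proximal problem min_x [f(x) + ½‖x − r‖²_γ] has a unique minimizer g(r), the map r ↦ g(r) is continuously differentiable, and its Jacobian satisfies ∂g(r)/∂r = (∇²f(g(r)) + Γ)⁻¹ Γ; equivalently, [∂g(r)/∂r] Γ⁻¹ = (∇²f(g(r)) + Γ)⁻¹. -/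
/-!
For fixed `r` the objective `h_r(x) = f x + ½‖x - r‖²_γ` satisfies the first-order inequality
`f x ≥ f y + Df(y)(x - y)`, because the Hessian of `f` is positive semidefinite (`gradient_ineq`).
This makes `h_r` coercive, so it has a minimizer, and it shows that every critical point of `h_r` is
its unique strict minimizer.

The critical point equation of `h_r` reads `G x = Γ r`, where `G x = ∇f(x) + Γ x` (`critMap`).
Hence `G` is a bijection, and `g r = G⁻¹ (Γ r)`.  The derivative of `G` at `x` is multiplication by
the positive definite matrix `∇²f(x) + Γ` (`hasFDerivAt_critMap`), so the inverse function theorem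
makes `G⁻¹` a `C¹` map with derivative `(∇²f(G⁻¹ y) + Γ)⁻¹` (`contDiff_of_globalInverse`); the chain
rule gives the Jacobian of `g`.
-/

open Matrix

/-- The Hessian matrix of `f : ℝ^N → ℝ` at `x`, with entries `∂²f/∂xᵢ∂xⱼ`. -/
noncomputable def hessianMatrix {N : ℕ} (f : (Fin N → ℝ) → ℝ) (x : Fin N → ℝ) :
    Matrix (Fin N) (Fin N) ℝ :=
  Matrix.of fun i j => fderiv ℝ (fun y => fderiv ℝ f y (Pi.single j 1)) x (Pi.single i 1)

/-- The Jacobian matrix of `g : ℝ^N → ℝ^N` at `r`, with entries `∂gᵢ/∂rⱼ`. -/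
noncomputable def jacobianMatrix {N : ℕ} (g : (Fin N → ℝ) → (Fin N → ℝ)) (r : Fin N → ℝ) :
    Matrix (Fin N) (Fin N) ℝ :=
  Matrix.of fun i j => fderiv ℝ (fun s => g s i) r (Pi.single j 1)

section Calculus

variable {N : ℕ} {f : (Fin N → ℝ) → ℝ}

/-- The map `x ↦ ∇f(x) + Γ x`, whose value is `Γ r` exactly at the critical points of
`x ↦ f x + ½‖x - r‖²_γ`. -/
noncomputable def critMap (f : (Fin N → ℝ) → ℝ) (γ : Fin N → ℝ) (x : Fin N → ℝ) : Fin N → ℝ :=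
  fun i => fderiv ℝ f x (Pi.single i 1) + γ i * x i

lemma clm_apply_eq_sum (L : (Fin N → ℝ) →L[ℝ] ℝ) (v : Fin N → ℝ) :
    L v = ∑ j, v j * L (Pi.single j 1) := by
  conv_lhs => rw [pi_eq_sum_univ' v]
  simp [map_sum]

lemma contDiff_partial (hf : ContDiff ℝ 2 f) (v : Fin N → ℝ) :
    ContDiff ℝ 1 (fun y => fderiv ℝ f y v) :=
  (hf.fderiv_right (m := 1) (by norm_num)).clm_apply contDiff_const

/-- The second derivative of `f` along a line is the Hessian quadratic form. -/
lemma hasDerivAt_directional (hf : ContDiff ℝ 2 f) (y v : Fin N → ℝ) (t : ℝ) :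
    HasDerivAt (fun t : ℝ => fderiv ℝ f (y + t • v) v)
      (v ⬝ᵥ (hessianMatrix f (y + t • v) *ᵥ v)) t := by
  have hline : HasDerivAt (fun t : ℝ => y + t • v) v t := by
    simpa using ((hasDerivAt_id t).smul_const v).const_add y
  have hj : ∀ j, HasDerivAt (fun t : ℝ => fderiv ℝ f (y + t • v) (Pi.single j 1))
      (fderiv ℝ (fun z => fderiv ℝ f z (Pi.single j 1)) (y + t • v) v) t := fun j => by
    have h := ((contDiff_partial hf (Pi.single j 1)).differentiable (by norm_num)
      (y + t • v)).hasFDerivAt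
    exact h.comp_hasDerivAt t hline
  have hsum := HasDerivAt.fun_sum (u := Finset.univ) fun j _ => (hj j).const_mul (v j)
  have heq : (fun t : ℝ => fderiv ℝ f (y + t • v) v)
      = fun t : ℝ => ∑ j, v j * fderiv ℝ f (y + t • v) (Pi.single j 1) :=
    funext fun t => clm_apply_eq_sum _ _
  rw [heq]
  refine hsum.congr_deriv (Eq.symm ?_)
  simp_rw [fun j => clm_apply_eq_sum
    (fderiv ℝ (fun z => fderiv ℝ f z (Pi.single j 1)) (y + t • v)) v]
  simp only [dotProduct, mulVec, hessianMatrix, Matrix.of_apply, Finset.mul_sum]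
  rw [Finset.sum_comm]
  refine Finset.sum_congr rfl fun i _ => Finset.sum_congr rfl fun j _ => by ring

/-- First-order convexity inequality for a `C²` function with positive semidefinite Hessian. -/
lemma gradient_ineq (hf : ContDiff ℝ 2 f)
    (hpos : ∀ x, (hessianMatrix f x).PosSemidef) (y x : Fin N → ℝ) :
    f y + fderiv ℝ f y (x - y) ≤ f x := by
  set v := x - y with hv
  have hφ : ∀ t : ℝ, HasDerivAt (fun t : ℝ => f (y + t • v)) (fderiv ℝ f (y + t • v) v) t := by
    intro t
    have hline : HasDerivAt (fun t : ℝ => y + t • v) v t := by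
      simpa using ((hasDerivAt_id t).smul_const v).const_add y
    exact ((hf.differentiable (by norm_num) (y + t • v)).hasFDerivAt).comp_hasDerivAt t hline
  have hmono : Monotone fun t : ℝ => fderiv ℝ f (y + t • v) v := by
    refine monotone_of_deriv_nonneg
      (fun t => (hasDerivAt_directional hf y v t).differentiableAt) fun t => ?_
    rw [(hasDerivAt_directional hf y v t).deriv]
    simpa using (hpos (y + t • v)).dotProduct_mulVec_nonneg v
  have hd : Differentiable ℝ fun t : ℝ => f (y + t • v) := fun t => (hφ t).differentiableAt
  obtain ⟨ξ, hξ, hslope⟩ := exists_deriv_eq_slope (fun t : ℝ => f (y + t • v)) zero_lt_one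
    hd.continuous.continuousOn hd.differentiableOn
  rw [(hφ ξ).deriv] at hslope
  have h0 := hmono hξ.1.le
  simp only [zero_smul, add_zero, one_smul, sub_zero, div_one] at h0 hslope
  have hx : y + v = x := by simp [hv]
  rw [hx] at hslope
  linarith

lemma exists_coercive_const (γ : Fin N → ℝ) (hγ : ∀ n, 0 < γ n) :
    ∃ m > 0, ∀ v : Fin N → ℝ, m * ‖v‖ ^ 2 ≤ ∑ n, γ n * v n ^ 2 := by
  rcases isEmpty_or_nonempty (Fin N) with hN | hN
  · exact ⟨1, one_pos, fun v => by simp [Subsingleton.elim v 0]⟩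
  · obtain ⟨n₀, hn₀⟩ := Finite.exists_min γ
    refine ⟨γ n₀, hγ n₀, fun v => ?_⟩
    obtain ⟨k, hk⟩ := Finite.exists_max fun n => ‖v n‖
    have hle : ‖v‖ ≤ ‖v k‖ := (pi_norm_le_iff_of_nonneg (norm_nonneg _)).2 hk
    calc γ n₀ * ‖v‖ ^ 2 ≤ γ k * ‖v k‖ ^ 2 := by
          have := hn₀ k
          have := (hγ k).le
          gcongr
      _ = γ k * v k ^ 2 := by simp
      _ ≤ ∑ n, γ n * v n ^ 2 := Finset.single_le_sum (f := fun n => γ n * v n ^ 2)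
          (fun n _ => mul_nonneg (hγ n).le (sq_nonneg _)) (Finset.mem_univ k)

/-- The proximal problem has a minimizer: the first-order inequality at `r` bounds the objective
below by a coercive function of `‖x - r‖`. -/
lemma exists_prox_min (hf : ContDiff ℝ 2 f) (hpos : ∀ x, (hessianMatrix f x).PosSemidef)
    (γ : Fin N → ℝ) (hγ : ∀ n, 0 < γ n) (r : Fin N → ℝ) :
    ∃ x, ∀ y, f x + (1/2) * ∑ n, γ n * (x n - r n)^2 ≤
      f y + (1/2) * ∑ n, γ n * (y n - r n)^2 := by
  obtain ⟨m, hm, hmv⟩ := exists_coercive_const γ hγ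
  refine Continuous.exists_forall_le (f := fun x => f x + (1/2) * ∑ n, γ n * (x n - r n)^2)
    (by have := hf.continuous; fun_prop) ?_
  set D := ‖fderiv ℝ f r‖
  have hnorm : Filter.Tendsto (fun x => ‖x - r‖) (Filter.cocompact (Fin N → ℝ)) Filter.atTop := by
    refine Filter.tendsto_atTop_mono (f := fun x => ‖x‖ + -‖r‖)
      (fun x => by have := norm_sub_norm_le x r; linarith) ?_
    exact Filter.tendsto_atTop_add_const_right _ _ (tendsto_norm_cocompact_atTop)
  -- The quadratic `½ m s² - D s` is at least the affine function `s - (D + 1)² / (2 m)`.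
  refine Filter.tendsto_atTop_mono (f := fun x => ‖x - r‖ + (f r - (D + 1) ^ 2 / (2 * m)))
    (fun x => ?_) (Filter.tendsto_atTop_add_const_right _ _ hnorm)
  have h1 := gradient_ineq hf hpos r x
  have h2 : -(D * ‖x - r‖) ≤ fderiv ℝ f r (x - r) :=
    (abs_le.1 ((fderiv ℝ f r).le_opNorm (x - r))).1
  have h3 := hmv (x - r)
  simp only [Pi.sub_apply] at h3
  have h4 : (D + 1) * ‖x - r‖ ≤ m / 2 * ‖x - r‖ ^ 2 + (D + 1) ^ 2 / (2 * m) := by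
    have : m / 2 * ‖x - r‖ ^ 2 + (D + 1) ^ 2 / (2 * m) - (D + 1) * ‖x - r‖
        = (m * ‖x - r‖ - (D + 1)) ^ 2 / (2 * m) := by field_simp; ring
    have : 0 ≤ (m * ‖x - r‖ - (D + 1)) ^ 2 / (2 * m) := by positivity
    linarith
  linarith

/-- A minimizer of the proximal objective solves the critical point equation. -/
lemma critMap_eq_of_min (hf : ContDiff ℝ 2 f) (γ r x : Fin N → ℝ)
    (hmin : ∀ y, f x + (1/2) * ∑ n, γ n * (x n - r n)^2 ≤
      f y + (1/2) * ∑ n, γ n * (y n - r n)^2) :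
    critMap f γ x = γ * r := by
  funext i
  set e : Fin N → ℝ := Pi.single i 1 with he
  have hline : HasDerivAt (fun t : ℝ => x + t • e) e 0 := by
    simpa using ((hasDerivAt_id (0 : ℝ)).smul_const e).const_add x
  have hfd : HasDerivAt (fun t : ℝ => f (x + t • e)) (fderiv ℝ f x e) 0 := by
    have h := (hf.differentiable (by norm_num) (x + (0 : ℝ) • e)).hasFDerivAt.comp_hasDerivAt
      0 hline
    simpa [Function.comp_def] using h
  have hq : HasDerivAt (fun t : ℝ => (1/2) * ∑ n, γ n * ((x + t • e) n - r n)^2)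
      ((1/2) * ∑ n, γ n * (2 * (x n - r n) * e n)) 0 := by
    refine (HasDerivAt.fun_sum fun n _ => ?_).const_mul _
    have h1 : HasDerivAt (fun t : ℝ => (x + t • e) n - r n) (e n) 0 :=
      ((hasDerivAt_pi.1 hline) n).sub_const _
    simpa using (h1.pow 2).const_mul (γ n)
  have hloc : IsLocalMin (fun t : ℝ => f (x + t • e)
      + (1/2) * ∑ n, γ n * ((x + t • e) n - r n)^2) 0 :=
    Filter.Eventually.of_forall fun t => by simpa using hmin (x + t • e)
  have h0 := hloc.hasDerivAt_eq_zero (hfd.add hq)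
  have hsum : ∑ n, γ n * (2 * (x n - r n) * e n) = 2 * (γ i * (x i - r i)) := by
    rw [Finset.sum_eq_single i]
    · simp [he]; ring
    · intro b _ hb; simp [he, hb]
    · simp
  rw [hsum] at h0
  simp only [critMap, Pi.mul_apply]
  linarith

/-- A critical point of the proximal objective is its unique strict minimizer: the objective
exceeds its value there by at least `½‖x - y‖²_γ`. -/
lemma lt_of_critMap_eq (hf : ContDiff ℝ 2 f) (hpos : ∀ x, (hessianMatrix f x).PosSemidef)
    (γ : Fin N → ℝ) (hγ : ∀ n, 0 < γ n) (r y : Fin N → ℝ) (hy : critMap f γ y = γ * r)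
    (x : Fin N → ℝ) (hxy : x ≠ y) :
    f y + (1/2) * ∑ n, γ n * (y n - r n)^2 < f x + (1/2) * ∑ n, γ n * (x n - r n)^2 := by
  obtain ⟨m, hm, hmv⟩ := exists_coercive_const γ hγ
  have h1 := gradient_ineq hf hpos y x
  have h2 : 0 < ∑ n, γ n * (x n - y n) ^ 2 := by
    have h := hmv (x - y)
    have : 0 < ‖x - y‖ := norm_pos_iff.2 (sub_ne_zero.2 hxy)
    exact lt_of_lt_of_le (by positivity) h
  have h3 : fderiv ℝ f y (x - y) = ∑ n, (x n - y n) * (γ n * (r n - y n)) := by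
    rw [clm_apply_eq_sum]
    refine Finset.sum_congr rfl fun n _ => ?_
    have := congrFun hy n
    simp only [critMap, Pi.mul_apply] at this
    rw [Pi.sub_apply, eq_sub_of_add_eq this]
    ring
  have h4 : (1/2) * ∑ n, γ n * (x n - r n)^2 = (1/2) * ∑ n, γ n * (y n - r n)^2
      - ∑ n, (x n - y n) * (γ n * (r n - y n)) + (1/2) * ∑ n, γ n * (x n - y n)^2 := by
    simp only [Finset.mul_sum, ← Finset.sum_add_distrib, ← Finset.sum_sub_distrib]
    exact Finset.sum_congr rfl fun n _ => by ring
  linarith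

lemma contDiff_critMap (hf : ContDiff ℝ 2 f) (γ : Fin N → ℝ) : ContDiff ℝ 1 (critMap f γ) :=
  contDiff_pi.2 fun i => (contDiff_partial hf _).add
    (contDiff_const.mul (contDiff_apply ℝ ℝ i))

/-- The derivative of `critMap f γ` is multiplication by `∇²f(x) + Γ`. Its rows are gradients of
`∂f/∂xᵢ`, hence columns of `hessianMatrix`, which is why symmetry of the latter is needed. -/
lemma hasFDerivAt_critMap (hf : ContDiff ℝ 2 f) (γ x : Fin N → ℝ)
    (hsymm : (hessianMatrix f x).IsHermitian) :
    HasFDerivAt (critMap f γ)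
      (Matrix.toLin' (hessianMatrix f x + Matrix.diagonal γ)).toContinuousLinearMap x := by
  refine hasFDerivAt_pi'.2 fun i => ?_
  have h1 := ((contDiff_partial hf (Pi.single i 1)).differentiable (by norm_num) x).hasFDerivAt
  have h2 : HasFDerivAt (fun x : Fin N → ℝ => γ i * x i)
      (γ i • ContinuousLinearMap.proj (R := ℝ) (φ := fun _ : Fin N => ℝ) i) x :=
    (hasFDerivAt_apply i x).const_mul (γ i)
  refine (h1.add h2).congr_fderiv ?_
  ext v
  have hs : ∀ j, hessianMatrix f x i j = hessianMatrix f x j i := fun j => by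
    exact (hsymm.apply i j).symm
  simp only [_root_.add_apply, _root_.smul_apply,
    ContinuousLinearMap.comp_apply, ContinuousLinearMap.proj_apply,
    LinearMap.coe_toContinuousLinearMap', Matrix.toLin'_apply, Matrix.add_mulVec, Pi.add_apply,
    Matrix.mulVec_diagonal, smul_eq_mul]
  rw [clm_apply_eq_sum]
  congr 1
  simp only [mulVec, dotProduct, hs]
  exact Finset.sum_congr rfl fun j _ => by simp [hessianMatrix, mul_comm]

end Calculus

/-- A global inverse of a `C¹` map with everywhere invertible derivative is `C¹`, since near each
point it coincides with the local inverse of the inverse function theorem. -/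
lemma contDiff_of_globalInverse {E : Type*} [NormedAddCommGroup E] [NormedSpace ℝ E]
    [CompleteSpace E] {G k : E → E} (hG : ContDiff ℝ 1 G) (hkG : ∀ x, k (G x) = x)
    (hGk : ∀ y, G (k y) = y) (G' : E → E ≃L[ℝ] E)
    (hG' : ∀ x, HasFDerivAt G (G' x : E →L[ℝ] E) x) :
    ContDiff ℝ 1 k ∧ ∀ y, HasFDerivAt k ((G' (k y)).symm : E →L[ℝ] E) y := by
  have hstrict : ∀ x, HasStrictFDerivAt G (G' x : E →L[ℝ] E) x := fun x =>
    hG.contDiffAt.hasStrictFDerivAt' (hG' x) one_ne_zero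
  constructor
  · rw [contDiff_iff_contDiffAt]
    intro y
    have h := (hG.contDiffAt (x := k y)).to_localInverse (hG' (k y)) one_ne_zero
    have hev := (hstrict (k y)).eventually_right_inverse
    rw [hGk] at h hev
    refine h.congr_of_eventuallyEq ?_
    filter_upwards [hev] with z hz
    have := congrArg k hz
    rw [hkG] at this
    exact this.symm
  · intro y
    have h := (hstrict (k y)).to_local_left_inverse (Filter.Eventually.of_forall hkG)
    rw [hGk] at h
    exact h.hasFDerivAt

/-- **Jacobian of the MAP (proximal) estimation function (eq. 13).**
Let `f : ℝ^N → ℝ` be `C²` with `c·I ⪯ ∇²f(x) ⪯ C·I` for all `x`, `0 < c ≤ C`,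
and let `γ > 0` componentwise with `Γ = Diag γ`.  Then the proximal problem
`min_x [f(x) + ½‖x − r‖²_γ]` has a unique minimizer `g(r)` for every `r`,
the map `g` is continuously differentiable, and its Jacobian satisfies
`∂g(r)/∂r = (∇²f(g(r)) + Γ)⁻¹ Γ`. -/
theorem map_estimation_jacobian
    (N : ℕ) (f : (Fin N → ℝ) → ℝ) (c C : ℝ)
    (hc : 0 < c) (hcC : c ≤ C)
    (hf : ContDiff ℝ 2 f)
    (hhess : ∀ x : Fin N → ℝ,
      (hessianMatrix f x - c • (1 : Matrix (Fin N) (Fin N) ℝ)).PosSemidef ∧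
      (C • (1 : Matrix (Fin N) (Fin N) ℝ) - hessianMatrix f x).PosSemidef)
    (γ : Fin N → ℝ) (hγ : ∀ n, 0 < γ n) :
    ∃ g : (Fin N → ℝ) → (Fin N → ℝ),
      (∀ r x, x ≠ g r →
        f (g r) + (1/2) * ∑ n, γ n * (g r n - r n)^2 <
        f x + (1/2) * ∑ n, γ n * (x n - r n)^2) ∧
      ContDiff ℝ 1 g ∧
      ∀ r, jacobianMatrix g r =
        (hessianMatrix f (g r) + Matrix.diagonal γ)⁻¹ * Matrix.diagonal γ := by
  have hpos : ∀ x, (hessianMatrix f x).PosSemidef := fun x => by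
    simpa using (hhess x).1.add (Matrix.PosSemidef.one.smul hc.le)
  have hunit : ∀ x, IsUnit (hessianMatrix f x + Matrix.diagonal γ) := fun x =>
    (Matrix.PosDef.posSemidef_add (hpos x) (Matrix.PosDef.diagonal hγ)).isUnit
  -- Every `y` is `Γ r` for `r = Γ⁻¹ y`, so solvability of the proximal problems makes `critMap`
  -- surjective.
  have hsurj : ∀ y, ∃ x, critMap f γ x = y := fun y => by
    obtain ⟨x, hx⟩ := exists_prox_min hf hpos γ hγ (fun n => y n / γ n)
    refine ⟨x, (critMap_eq_of_min hf γ _ x hx).trans ?_⟩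
    funext n
    exact mul_div_cancel₀ _ (hγ n).ne'
  choose k hk using hsurj
  have hmul : ∀ y : Fin N → ℝ, γ * (fun n => y n / γ n) = y := fun y =>
    funext fun n => mul_div_cancel₀ _ (hγ n).ne'
  have hinj : ∀ x, k (critMap f γ x) = x := fun x => by
    by_contra hne
    have h1 := lt_of_critMap_eq hf hpos γ hγ _ x (hmul (critMap f γ x)).symm _ hne
    have h2 := lt_of_critMap_eq hf hpos γ hγ _ (k (critMap f γ x))
      ((hk _).trans (hmul (critMap f γ x)).symm) _ (Ne.symm hne)
    exact lt_asymm h1 h2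
  let G' : (Fin N → ℝ) → (Fin N → ℝ) ≃L[ℝ] (Fin N → ℝ) := fun x =>
    (Matrix.toLinearEquiv' (hessianMatrix f x + Matrix.diagonal γ)
      (hunit x).invertible).toContinuousLinearEquiv
  obtain ⟨hkC, hkD⟩ := contDiff_of_globalInverse (contDiff_critMap hf γ) hinj hk G'
    fun x => (hasFDerivAt_critMap hf γ x (hpos x).isHermitian).congr_fderiv (by ext v i; rfl)
  refine ⟨fun r => k (γ * r), fun r x hx => lt_of_critMap_eq hf hpos γ hγ r _ (hk _) x hx,
    hkC.comp (contDiff_const.mul contDiff_id), fun r => ?_⟩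
  have hΓ : HasFDerivAt (fun r : Fin N → ℝ => γ * r)
      (Matrix.toLin' (Matrix.diagonal γ)).toContinuousLinearMap r := by
    refine (Matrix.toLin' (Matrix.diagonal γ)).toContinuousLinearMap.hasFDerivAt.congr_of_eventuallyEq
      (Filter.Eventually.of_forall fun s => ?_)
    funext n
    simp [Matrix.mulVec_diagonal]
  have hg := hasFDerivAt_pi'.1 ((hkD (γ * r)).comp r hΓ)
  ext i j
  have hi := (hg i).fderiv
  simp only [Function.comp_def] at hi
  let := (hunit (k (γ * r))).invertible
  have hsymm : ∀ v, (G' (k (γ * r))).symm v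
      = (hessianMatrix f (k (γ * r)) + Matrix.diagonal γ)⁻¹ *ᵥ v := fun v => by
    rw [ContinuousLinearEquiv.symm_apply_eq]
    change v = (hessianMatrix f (k (γ * r)) + Matrix.diagonal γ) *ᵥ _
    rw [Matrix.mulVec_mulVec, Matrix.mul_inv_of_invertible, Matrix.one_mulVec]
  rw [jacobianMatrix, Matrix.of_apply, hi]
  simp only [ContinuousLinearMap.comp_apply, ContinuousLinearEquiv.coe_coe, hsymm,
    ContinuousLinearMap.proj_apply, LinearMap.coe_toContinuousLinearMap', Matrix.toLin'_apply,
    Matrix.mulVec_single_one]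
  rfl
end

section
/- Let f : ℝ^N → ℝ be measurable and bounded below, and fix γ ∈ ℝ^N with γ > 0 componentwise, Γ := Diag(γ). For r ∈ ℝ^N define Z(r) := ∫ exp(−f(x) − ½‖x − r‖²_γ) dx ∈ (0, ∞) and the probability density p(x|r) := Z(r)⁻¹ exp(−f(x) − ½‖x − r‖²_γ), with posterior mean m(r) := ∫ x p(x|r) dx and posterior covariance Cov(r) := ∫ (x − m(r))(x − m(r))ᵀ p(x|r) dx. Then m is differentiable and its Jacobian satisfies ∂m(r)/∂r = Cov(r) Γ; equivalently, [∂m(r)/∂r] Γ⁻¹ = Cov(r). -/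
/-!
Write `d r x` for the unnormalized density and `G x = 1 + ∑ xₙ²`. Since `f` is bounded below,
for `r` in the unit ball around `r₀` the function `G · d r` lies below one integrable Gaussian
centred at `r₀` (`gecDens_dominated`). This makes every integral in sight converge and justifies
differentiation under the integral sign: for `g` of linear growth,
`∂ⱼ ∫ d r x * g x = γⱼ ∫ d r x * g x * (xⱼ - rⱼ)` (`hasFDerivAt_integral_gecDens_mul`). Taking
`g = xᵢ` and `g = 1` and applying the quotient rule to `mᵢ = (∫ d r x * xᵢ) / Z` gives
`γⱼ (E[xᵢ xⱼ] - E[xᵢ] E[xⱼ])`; the terms containing `rⱼ` cancel.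
-/

open MeasureTheory Matrix

/-- The unnormalized posterior density `exp(−f(x) − ½‖x − r‖²_γ)`. -/
noncomputable def gecDens {N : ℕ} (f : (Fin N → ℝ) → ℝ) (γ : Fin N → ℝ)
    (r x : Fin N → ℝ) : ℝ :=
  Real.exp (-(f x) - (1/2) * ∑ n, γ n * (x n - r n)^2)

/-- The partition function `Z(r) = ∫ exp(−f(x) − ½‖x − r‖²_γ) dx`. -/
noncomputable def gecZ {N : ℕ} (f : (Fin N → ℝ) → ℝ) (γ : Fin N → ℝ)
    (r : Fin N → ℝ) : ℝ :=
  ∫ x : Fin N → ℝ, gecDens f γ r x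

/-- The posterior mean `m(r) = ∫ x p(x|r) dx`. -/
noncomputable def gecMean {N : ℕ} (f : (Fin N → ℝ) → ℝ) (γ : Fin N → ℝ)
    (r : Fin N → ℝ) : Fin N → ℝ :=
  fun i => (∫ x : Fin N → ℝ, gecDens f γ r x * x i) / gecZ f γ r

/-- The posterior covariance matrix `Cov(r) = ∫ (x − m(r))(x − m(r))ᵀ p(x|r) dx`. -/
noncomputable def gecCov {N : ℕ} (f : (Fin N → ℝ) → ℝ) (γ : Fin N → ℝ)
    (r : Fin N → ℝ) : Matrix (Fin N) (Fin N) ℝ :=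
  Matrix.of fun i j =>
    (∫ x : Fin N → ℝ,
      gecDens f γ r x * (x i - gecMean f γ r i) * (x j - gecMean f γ r j)) / gecZ f γ r

/-- Anisotropic Gaussians on `ℝ^N` are integrable. -/
lemma integrable_exp_neg_weighted_sq {N : ℕ} (γ : Fin N → ℝ) (hγ : ∀ n, 0 < γ n)
    (r : Fin N → ℝ) :
    Integrable (fun x : Fin N → ℝ => Real.exp (-(1/8) * ∑ n, γ n * (x n - r n)^2)) := by
  have h : ∀ n, Integrable (fun t : ℝ => Real.exp (-(γ n / 8) * (t - r n)^2)) := fun n =>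
    (integrable_exp_neg_mul_sq (b := γ n / 8) (by have := hγ n; positivity)).comp_sub_right (r n)
  have h2 := Integrable.fintype_prod (μ := fun _ : Fin N => (volume : Measure ℝ)) h
  rw [← volume_pi] at h2
  refine h2.congr (Filter.Eventually.of_forall fun x => ?_)
  simp only [← Real.exp_sum, Finset.mul_sum]
  congr 1
  exact Finset.sum_congr rfl fun n _ => by ring

/-- The factor `1 + ∑ xₙ²` is absorbed by a Gaussian weight centred at any point `r`. -/
lemma exists_one_add_sum_sq_le {N : ℕ} (γ : Fin N → ℝ) (hγ : ∀ n, 0 < γ n) (r : Fin N → ℝ) :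
    ∃ K : ℝ, 0 ≤ K ∧ ∀ x : Fin N → ℝ,
      1 + ∑ n, x n ^ 2 ≤ K * Real.exp ((1/8) * ∑ n, γ n * (x n - r n)^2) := by
  have hs : 0 ≤ ∑ n, 16 / γ n := Finset.sum_nonneg fun n _ => by have := hγ n; positivity
  have hr : 0 ≤ ∑ n, 2 * r n ^ 2 := Finset.sum_nonneg fun n _ => by positivity
  refine ⟨1 + ∑ n, 2 * r n ^ 2 + ∑ n, 16 / γ n, by positivity, fun x => ?_⟩
  set E := ∑ n, γ n * (x n - r n)^2 with hE
  have hE0 : 0 ≤ E := Finset.sum_nonneg fun n _ => by have := hγ n; positivity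
  have hx : ∑ n, x n ^ 2 ≤ ∑ n, 2 * r n ^ 2 + (∑ n, 16 / γ n) * (E / 8) := by
    rw [Finset.sum_mul, ← Finset.sum_add_distrib]
    refine Finset.sum_le_sum fun n _ => ?_
    have hn := hγ n
    have h1 : γ n * (x n - r n)^2 ≤ E :=
      Finset.single_le_sum (f := fun n => γ n * (x n - r n)^2)
        (fun n _ => by have := hγ n; positivity) (Finset.mem_univ n)
    have h2 : 2 * (x n - r n)^2 ≤ 16 / γ n * (E / 8) := by
      have : 16 / γ n * (E / 8) = 2 * E / γ n := by ring
      rw [this, le_div_iff₀ hn]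
      linarith
    nlinarith [sq_nonneg (x n - 2 * r n)]
  have he : 1 + E / 8 ≤ Real.exp ((1/8) * E) := by
    have := Real.add_one_le_exp ((1/8) * E)
    linarith
  calc 1 + ∑ n, x n ^ 2
      ≤ (1 + ∑ n, 2 * r n ^ 2 + ∑ n, 16 / γ n) * (1 + E / 8) := by
        nlinarith [mul_nonneg hr hE0]
    _ ≤ _ := mul_le_mul_of_nonneg_left he (by positivity)

/-- Locally uniform domination of `(1 + ∑ xₙ²) · d r x` by an integrable function. -/
lemma gecDens_dominated {N : ℕ} {f : (Fin N → ℝ) → ℝ} (hbdd : ∃ B : ℝ, ∀ x, B ≤ f x)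
    {γ : Fin N → ℝ} (hγ : ∀ n, 0 < γ n) (r₀ : Fin N → ℝ) :
    ∃ b : (Fin N → ℝ) → ℝ, Integrable b ∧ ∀ r ∈ Metric.ball r₀ 1, ∀ x,
      (1 + ∑ n, x n ^ 2) * gecDens f γ r x ≤ b x := by
  obtain ⟨B, hB⟩ := hbdd
  obtain ⟨K, hK, hG⟩ := exists_one_add_sum_sq_le γ hγ r₀
  refine ⟨fun x => (K * Real.exp (-B + (1/2) * ∑ n, γ n)) *
    Real.exp (-(1/8) * ∑ n, γ n * (x n - r₀ n)^2),
    (integrable_exp_neg_weighted_sq γ hγ r₀).const_mul _, fun r hr x => ?_⟩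
  -- Convexity: `(x - r₀)² ≤ 2 (x - r)² + 2 (r - r₀)²` and `|r - r₀| < 1` coordinatewise.
  have hsum : (1/2) * ∑ n, γ n * (x n - r₀ n)^2 - ∑ n, γ n ≤ ∑ n, γ n * (x n - r n)^2 := by
    rw [Finset.mul_sum, ← Finset.sum_sub_distrib]
    refine Finset.sum_le_sum fun n _ => ?_
    have h1 : |r n - r₀ n| < 1 := by
      rw [← Real.dist_eq]
      exact lt_of_le_of_lt (dist_le_pi_dist r r₀ n) hr
    have h2 : (r n - r₀ n)^2 ≤ 1 := by
      rw [← sq_abs]; nlinarith [abs_nonneg (r n - r₀ n)]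
    have h3 : (1/2) * (x n - r₀ n)^2 - 1 ≤ (x n - r n)^2 := by
      nlinarith [sq_nonneg ((x n - r n) - (r n - r₀ n))]
    nlinarith [mul_le_mul_of_nonneg_left h3 (hγ n).le]
  have hd : gecDens f γ r x ≤ Real.exp (-B + (1/2) * ∑ n, γ n) *
      Real.exp (-(1/4) * ∑ n, γ n * (x n - r₀ n)^2) := by
    rw [gecDens, ← Real.exp_add, Real.exp_le_exp]
    linarith [hB x]
  calc (1 + ∑ n, x n ^ 2) * gecDens f γ r x
      ≤ (K * Real.exp ((1/8) * ∑ n, γ n * (x n - r₀ n)^2)) *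
        (Real.exp (-B + (1/2) * ∑ n, γ n) *
          Real.exp (-(1/4) * ∑ n, γ n * (x n - r₀ n)^2)) :=
        mul_le_mul (hG x) hd (Real.exp_nonneg _) (by positivity)
    _ = (K * Real.exp (-B + (1/2) * ∑ n, γ n)) *
        (Real.exp ((1/8) * ∑ n, γ n * (x n - r₀ n)^2) *
          Real.exp (-(1/4) * ∑ n, γ n * (x n - r₀ n)^2)) := by ring
    _ = _ := by
        rw [← Real.exp_add]
        congr 2
        ring

lemma measurable_gecDens {N : ℕ} {f : (Fin N → ℝ) → ℝ} (hf : Measurable f)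
    (γ r : Fin N → ℝ) : Measurable (gecDens f γ r) := by
  unfold gecDens
  fun_prop

/-- Functions of at most quadratic growth are integrable against the density. -/
lemma integrable_gecDens_mul {N : ℕ} {f : (Fin N → ℝ) → ℝ} (hf : Measurable f)
    (hbdd : ∃ B : ℝ, ∀ x, B ≤ f x) {γ : Fin N → ℝ} (hγ : ∀ n, 0 < γ n) (r : Fin N → ℝ)
    {g : (Fin N → ℝ) → ℝ} (hg : Measurable g) (hgb : ∀ x, |g x| ≤ 1 + ∑ n, x n ^ 2) :
    Integrable (fun x => gecDens f γ r x * g x) := by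
  obtain ⟨b, hb, hdom⟩ := gecDens_dominated hbdd hγ r
  refine hb.mono' ((measurable_gecDens hf γ r).mul hg).aestronglyMeasurable
    (Filter.Eventually.of_forall fun x => ?_)
  have hd : 0 ≤ gecDens f γ r x := Real.exp_nonneg _
  rw [norm_mul, Real.norm_eq_abs, Real.norm_eq_abs, abs_of_nonneg hd, mul_comm]
  exact (mul_le_mul_of_nonneg_right (hgb x) hd).trans
    (hdom r (Metric.mem_ball_self one_pos) x)

lemma sq_le_one_add_sum_sq {N : ℕ} (x : Fin N → ℝ) (i : Fin N) :
    x i ^ 2 ≤ 1 + ∑ n, x n ^ 2 := by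
  have := Finset.single_le_sum (f := fun n => x n ^ 2) (fun n _ => sq_nonneg _)
    (Finset.mem_univ i)
  linarith

lemma one_le_one_add_sum_sq {N : ℕ} (x : Fin N → ℝ) : 1 ≤ 1 + ∑ n, x n ^ 2 := by
  have : 0 ≤ ∑ n, x n ^ 2 := Finset.sum_nonneg fun n _ => sq_nonneg _
  linarith

lemma abs_mul_le_of_sq_le {a b c : ℝ} (ha : a ^ 2 ≤ c) (hb : b ^ 2 ≤ c) : |a * b| ≤ c := by
  rw [abs_le]
  constructor <;> nlinarith [sq_nonneg (a - b), sq_nonneg (a + b)]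

lemma hasFDerivAt_gecDens {N : ℕ} (f : (Fin N → ℝ) → ℝ) (γ r x : Fin N → ℝ) :
    HasFDerivAt (fun r => gecDens f γ r x)
      (gecDens f γ r x • ∑ n, (γ n * (x n - r n)) •
        (ContinuousLinearMap.proj n : (Fin N → ℝ) →L[ℝ] ℝ)) r := by
  have h1 : ∀ n, HasFDerivAt (fun r : Fin N → ℝ => γ n * (x n - r n)^2)
      ((-(2 * (γ n * (x n - r n)))) • (ContinuousLinearMap.proj n : (Fin N → ℝ) →L[ℝ] ℝ)) r := by
    intro n
    have h := (((hasFDerivAt_apply (𝕜 := ℝ) n r).const_sub (x n)).pow 2).const_mul (γ n)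
    refine h.congr_fderiv ?_
    ext v
    simp
    ring
  have h2 := (((HasFDerivAt.fun_sum (u := Finset.univ) fun n _ => h1 n).const_mul
    (1/2)).const_sub (-(f x))).exp
  refine h2.congr_fderiv ?_
  ext v
  simp only [gecDens, _root_.smul_apply, _root_.neg_apply,
    _root_.sum_apply, smul_eq_mul, ContinuousLinearMap.proj_apply, Finset.mul_sum,
    ← Finset.sum_neg_distrib]
  refine Finset.sum_congr rfl fun n _ => ?_
  ring

/-- Differentiation under the integral sign: for `g` of linear growth, `r ↦ ∫ d r x * g x` is
differentiable with `j`-th partial derivative `γⱼ ∫ d r x * g x * (xⱼ - rⱼ)`. -/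
lemma hasFDerivAt_integral_gecDens_mul {N : ℕ} {f : (Fin N → ℝ) → ℝ} (hf : Measurable f)
    (hbdd : ∃ B : ℝ, ∀ x, B ≤ f x) {γ : Fin N → ℝ} (hγ : ∀ n, 0 < γ n) (r₀ : Fin N → ℝ)
    {g : (Fin N → ℝ) → ℝ} (hg : Measurable g) (hgb : ∀ x, g x ^ 2 ≤ 1 + ∑ n, x n ^ 2) :
    ∃ L : (Fin N → ℝ) →L[ℝ] ℝ,
      HasFDerivAt (fun r => ∫ x, gecDens f γ r x * g x) L r₀ ∧
      ∀ j, L (Pi.single j 1) = γ j * ((∫ x, gecDens f γ r₀ x * (g x * x j)) -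
        r₀ j * ∫ x, gecDens f γ r₀ x * g x) := by
  obtain ⟨b, hb, hdom⟩ := gecDens_dominated hbdd hγ r₀
  have hg1 : ∀ x, |g x| ≤ 1 + ∑ n, x n ^ 2 := fun x => by
    simpa using abs_mul_le_of_sq_le (hgb x)
      (b := 1) (by simpa using one_le_one_add_sum_sq x)
  set F' : (Fin N → ℝ) → (Fin N → ℝ) → ((Fin N → ℝ) →L[ℝ] ℝ) := fun r x =>
    ∑ n, (gecDens f γ r x * (g x * (γ n * (x n - r n)))) •
      (ContinuousLinearMap.proj n : (Fin N → ℝ) →L[ℝ] ℝ) with hF'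
  set C : ℝ := ∑ n, γ n * (2 + (|r₀ n| + 1)^2) with hC
  have hbound : ∀ x, ∀ r ∈ Metric.ball r₀ 1, ‖F' r x‖ ≤ C * b x := by
    intro x r hr
    have hd : 0 ≤ gecDens f γ r x := Real.exp_nonneg _
    rw [hF', hC, Finset.sum_mul]
    refine (norm_sum_le _ _).trans (Finset.sum_le_sum fun n _ => ?_)
    have hn := hγ n
    have hproj : ‖(ContinuousLinearMap.proj n : (Fin N → ℝ) →L[ℝ] ℝ)‖ ≤ 1 :=
      ContinuousLinearMap.opNorm_le_bound _ zero_le_one fun v => by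
        simpa using norm_le_pi_norm v n
    have hrn : r n ^ 2 ≤ (|r₀ n| + 1)^2 := by
      have h1 : |r n - r₀ n| < 1 := by
        rw [← Real.dist_eq]
        exact lt_of_le_of_lt (dist_le_pi_dist r r₀ n) hr
      have h2 : |r n| ≤ |r₀ n| + 1 := by
        have := abs_sub_abs_le_abs_sub (r n) (r₀ n)
        linarith
      rw [← sq_abs (r n)]
      exact pow_le_pow_left₀ (abs_nonneg _) h2 2
    have hG := one_le_one_add_sum_sq x
    have hxn := sq_le_one_add_sum_sq x n
    have hgx := hgb x
    set G := 1 + ∑ n, x n ^ 2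
    have hA : |g x * (x n - r n)| ≤ (2 + (|r₀ n| + 1)^2) * G := by
      set R := (|r₀ n| + 1)^2
      have hR : 0 ≤ R := sq_nonneg _
      have hRG : R ≤ R * G := le_mul_of_one_le_right hR hG
      rw [abs_le]
      constructor <;>
        nlinarith [sq_nonneg (g x - (x n - r n)), sq_nonneg (g x + (x n - r n)),
          sq_nonneg (x n + r n)]
    have hR : 0 ≤ γ n * (2 + (|r₀ n| + 1)^2) := by positivity
    calc _ ≤ ‖gecDens f γ r x * (g x * (γ n * (x n - r n)))‖ * 1 := by
          rw [norm_smul]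
          exact mul_le_mul_of_nonneg_left hproj (norm_nonneg _)
      _ = gecDens f γ r x * γ n * |g x * (x n - r n)| := by
          rw [mul_one, Real.norm_eq_abs, abs_mul, abs_of_nonneg hd,
            show g x * (γ n * (x n - r n)) = γ n * (g x * (x n - r n)) by ring, abs_mul,
            abs_of_pos hn, mul_assoc]
      _ ≤ gecDens f γ r x * γ n * ((2 + (|r₀ n| + 1)^2) * G) :=
          mul_le_mul_of_nonneg_left hA (by positivity)
      _ = γ n * (2 + (|r₀ n| + 1)^2) * (G * gecDens f γ r x) := by ring
      _ ≤ _ := mul_le_mul_of_nonneg_left (hdom r hr x) hR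
  have hF'm : AEStronglyMeasurable (F' r₀) volume := by
    have hm := measurable_gecDens hf γ r₀
    refine Finset.aestronglyMeasurable_fun_sum _ fun n _ => ?_
    have : Measurable fun x : Fin N → ℝ =>
      gecDens f γ r₀ x * (g x * (γ n * (x n - r₀ n))) := by fun_prop
    exact this.aestronglyMeasurable.smul_const _
  have hball : Metric.ball r₀ 1 ∈ nhds r₀ := Metric.ball_mem_nhds _ one_pos
  have hF'i : Integrable (F' r₀) := (hb.const_mul C).mono' hF'm
    (Filter.Eventually.of_forall fun x => hbound x r₀ (Metric.mem_ball_self one_pos))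
  refine ⟨∫ x, F' r₀ x, hasFDerivAt_integral_of_dominated_of_fderiv_le hball
    (Filter.Eventually.of_forall fun r =>
      ((measurable_gecDens hf γ r).mul hg).aestronglyMeasurable)
    (integrable_gecDens_mul hf hbdd hγ r₀ hg hg1) hF'm
    (Filter.Eventually.of_forall hbound) (hb.const_mul C)
    (Filter.Eventually.of_forall fun x r _ => ?_), fun j => ?_⟩
  · refine ((hasFDerivAt_gecDens f γ r x).mul_const (g x)).congr_fderiv ?_
    ext v
    simp only [hF', _root_.smul_apply, _root_.sum_apply, smul_eq_mul,
      ContinuousLinearMap.proj_apply, Finset.mul_sum]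
    exact Finset.sum_congr rfl fun n _ => by ring
  · have hI1 : Integrable fun x => gecDens f γ r₀ x * (g x * x j) :=
      integrable_gecDens_mul hf hbdd hγ r₀ (hg.mul (measurable_pi_apply j)) fun x => abs_mul_le_of_sq_le (hgb x) (sq_le_one_add_sum_sq x j)
    have hI2 := integrable_gecDens_mul hf hbdd hγ r₀ hg hg1
    rw [ContinuousLinearMap.integral_apply hF'i, ← integral_const_mul (r₀ j),
      ← integral_sub hI1 (hI2.const_mul _), ← integral_const_mul]
    refine integral_congr_ae (Filter.Eventually.of_forall fun x => ?_)
    simp only [hF', _root_.smul_apply, _root_.sum_apply, smul_eq_mul,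
      ContinuousLinearMap.proj_apply, Pi.single_apply, mul_ite, mul_one, mul_zero,
      Finset.sum_ite_eq', Finset.mem_univ, if_true]
    ring

lemma gecZ_pos {N : ℕ} {f : (Fin N → ℝ) → ℝ} (hf : Measurable f)
    (hbdd : ∃ B : ℝ, ∀ x, B ≤ f x) {γ : Fin N → ℝ} (hγ : ∀ n, 0 < γ n) (r : Fin N → ℝ) :
    0 < gecZ f γ r := by
  have h := integrable_gecDens_mul hf hbdd hγ r (g := fun _ => 1) measurable_const
    (fun x => by simpa using one_le_one_add_sum_sq x)
  simp only [mul_one] at h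
  exact integral_exp_pos h

/-- `Cov = E[xᵢ xⱼ] - E[xᵢ] E[xⱼ]`, with the expectations written as unnormalized integrals. -/
lemma gecCov_apply {N : ℕ} {f : (Fin N → ℝ) → ℝ} (hf : Measurable f)
    (hbdd : ∃ B : ℝ, ∀ x, B ≤ f x) {γ : Fin N → ℝ} (hγ : ∀ n, 0 < γ n) (r : Fin N → ℝ)
    (i j : Fin N) :
    gecCov f γ r i j = (∫ x, gecDens f γ r x * (x i * x j)) / gecZ f γ r -
      (∫ x, gecDens f γ r x * x i) * (∫ x, gecDens f γ r x * x j) / gecZ f γ r ^ 2 := by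
  have hZ := (gecZ_pos hf hbdd hγ r).ne'
  have hI : ∀ k, Integrable (fun x => gecDens f γ r x * x k) := fun k =>
    integrable_gecDens_mul hf hbdd hγ r (measurable_pi_apply k) fun x => by
      simpa using abs_mul_le_of_sq_le (sq_le_one_add_sum_sq x k)
        (b := 1) (by simpa using one_le_one_add_sum_sq x)
  have hI2 : Integrable (fun x => gecDens f γ r x * (x i * x j)) :=
    integrable_gecDens_mul hf hbdd hγ r ((measurable_pi_apply i).mul (measurable_pi_apply j))
      fun x => abs_mul_le_of_sq_le (sq_le_one_add_sum_sq x i) (sq_le_one_add_sum_sq x j)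
  have hI0 : Integrable (fun x => gecDens f γ r x) := by
    simpa using integrable_gecDens_mul hf hbdd hγ r (g := fun _ => 1) measurable_const
      (fun x => by simpa using one_le_one_add_sum_sq x)
  have key : ∀ a c : ℝ, ∫ x, gecDens f γ r x * (x i - a) * (x j - c) =
      (∫ x, gecDens f γ r x * (x i * x j)) - c * (∫ x, gecDens f γ r x * x i)
        - a * (∫ x, gecDens f γ r x * x j) + a * c * gecZ f γ r := by
    intro a c
    have h1 := hI2.sub ((hI i).const_mul c)
    have h2 := h1.sub ((hI j).const_mul a)
    rw [gecZ, ← integral_const_mul c, ← integral_const_mul a, ← integral_const_mul (a * c),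
      ← integral_sub' hI2 ((hI i).const_mul c), ← integral_sub' h1 ((hI j).const_mul a),
      ← integral_add' h2 (hI0.const_mul (a * c))]
    refine integral_congr_ae (Filter.Eventually.of_forall fun x => ?_)
    simp only [Pi.sub_apply, Pi.add_apply]
    ring
  simp only [gecCov, Matrix.of_apply, key, gecMean]
  field_simp
  ring

/-- **Jacobian of the MMSE estimation function equals the posterior covariance
(eq. 14).**  Let `f : ℝ^N → ℝ` be measurable and bounded below and `γ > 0`
componentwise.  Then the posterior mean `m(r)` of the density
`p(x|r) ∝ exp(−f(x) − ½‖x−r‖²_γ)` is differentiable in `r` and its Jacobian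
satisfies `∂m(r)/∂r = Cov(r) Γ`, where `Γ = Diag γ` and `Cov(r)` is the
posterior covariance. -/
theorem mmse_estimation_jacobian
    (N : ℕ) (f : (Fin N → ℝ) → ℝ)
    (hf : Measurable f) (hbdd : ∃ B : ℝ, ∀ x, B ≤ f x)
    (γ : Fin N → ℝ) (hγ : ∀ n, 0 < γ n) :
    Differentiable ℝ (gecMean f γ) ∧
    ∀ r, jacobianMatrix (gecMean f γ) r = gecCov f γ r * Matrix.diagonal γ := by
  have hm : ∀ r i, ∃ L : (Fin N → ℝ) →L[ℝ] ℝ,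
      HasFDerivAt (fun s => gecMean f γ s i) L r ∧
      ∀ j, L (Pi.single j 1) = gecCov f γ r i j * γ j := by
    intro r i
    have hZ := (gecZ_pos hf hbdd hγ r).ne'
    obtain ⟨L₁, hL₁, hL₁'⟩ := hasFDerivAt_integral_gecDens_mul hf hbdd hγ r
      (measurable_pi_apply i) (fun x => sq_le_one_add_sum_sq x i)
    obtain ⟨L₀, hL₀, hL₀'⟩ := hasFDerivAt_integral_gecDens_mul hf hbdd hγ r
      (g := fun _ => 1) measurable_const (fun x => by simpa using one_le_one_add_sum_sq x)
    simp only [mul_one, one_mul] at hL₀ hL₀'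
    have hdiv := hL₁.mul ((hasDerivAt_inv hZ).comp_hasFDerivAt r hL₀)
    refine ⟨_, hdiv.congr_of_eventuallyEq (Filter.Eventually.of_forall fun s =>
      div_eq_mul_inv _ _), fun j => ?_⟩
    rw [gecCov_apply hf hbdd hγ]
    simp only [_root_.smul_apply, _root_.add_apply, smul_eq_mul,
      Function.comp_apply, hL₁', hL₀']
    rw [show (∫ x, gecDens f γ r x) = gecZ f γ r from rfl]
    field_simp
    ring
  refine ⟨fun r => differentiableAt_pi.2 fun i => ?_, fun r => ?_⟩
  · obtain ⟨L, hL, -⟩ := hm r i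
    exact hL.differentiableAt
  · ext i j
    obtain ⟨L, hL, hL'⟩ := hm r i
    rw [Matrix.mul_diagonal, ← hL' j, jacobianMatrix, Matrix.of_apply, hL.fderiv]
end

section
/- Let f : ℝ^N → ℝ be twice continuously differentiable with c·I ⪯ ∇²f(x) ⪯ C·I for all x, where 0 < c ≤ C. Fix γ ∈ ℝ^N with γ > 0 componentwise, Γ := Diag(γ), and r ∈ ℝ^N, and let p(x|r) := Z(r)⁻¹ exp(−f(x) − ½‖x − r‖²_γ) be the corresponding probability density with covariance matrix Cov(r). Then (C·I + Γ)⁻¹ ⪯ Cov(r) ⪯ (c·I + Γ)⁻¹ in the Loewner order; equivalently, c·I + Γ ⪯ Cov(r)⁻¹ ⪯ C·I + Γ. -/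
/-!
Write `V x = f x + ½‖x - r‖²_γ`, `w = exp (-V)`, `Z = ∫ w`, and for a vector `u` let
`t x = u ⬝ x - μ`, with `μ` the mean of `u ⬝ x`. The inverses of `c I + Γ` and `C I + Γ` are
diagonal, so both Loewner inequalities reduce to bounds on `∫ w t²`, namely
`Z ∑ uᵢ² / Mᵢ ≤ ∫ w t² ≤ Z ∑ uᵢ² / lᵢ` with `l = c + γ` and `M = C + γ`. The Hessian enters only
through the second differences, `∑ lᵢ hᵢ² ≤ V (x + h) + V (x - h) - 2 V x ≤ ∑ Mᵢ hᵢ²`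
(`second_difference_bounds`).

Upper bound (`var_le`). Completing the square in the lower second-difference bound gives
`w x e^{s t x} · w y e^{-s t y} ≤ (w ((x + y) / 2))² e^{s² q}` with `q = ∑ uᵢ² / lᵢ`. By the
Prékopa–Leindler inequality (`pl_pi`, proved from the one-dimensional Brunn–Minkowski inequality),
`∫ w e^{s t} · ∫ w e^{-s t} ≤ Z² e^{s² q}` (`tilt_mul_le`). The left side is a double integral of
`w x w y cosh (s (t x - t y))`, at least `Z² + s² Z ∫ w t²` since `cosh z ≥ 1 + z² / 2` and `t` has
mean zero. Comparison of the slopes in `s²` at `0` gives the bound.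

Lower bound (`le_var`). Let `a = s M⁻¹ u` and now `q = ∑ uᵢ² / Mᵢ`. The nonnegative integral
`∫ w (s t + w (· + a) / w - 1)²` equals `s² ∫ w t² - 2 s² q Z + (∫ w (· + a)² / w - Z)`, because
translation by `a` shifts `t` by `s q`. The upper second-difference bound gives
`w (x + a)² / w x ≤ e^{s² q} w (x + 2 a)`, so the last bracket is at most `Z (e^{s² q} - 1)`.
Again the slopes in `s²` at `0` give the bound.
-/

open MeasureTheory Matrix

/-! ### Prékopa–Leindler inequality -/

section PrekopaLeindler

open scoped ENNReal Pointwise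

/-- One-dimensional Brunn–Minkowski inequality, with the half-sum `(A + B) / 2` enclosed in an
arbitrary set `S`, so that no measurability of a sumset is involved. For compact `K ⊆ A` and
`L ⊆ B`, the half-sums of `K` with `min L` and of `max K` with `L` meet in at most one point. -/
lemma volume_halfsum {A B S : Set ℝ} (hA : MeasurableSet A) (hB : MeasurableSet B)
    (hA0 : A.Nonempty) (hB0 : B.Nonempty)
    (h : ∀ a ∈ A, ∀ b ∈ B, (a + b) / 2 ∈ S) :
    volume A + volume B ≤ 2 * volume S := by
  have half : ∀ (K : Set ℝ) (r : ℝ),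
      volume K = 2 * volume ((fun x => (x + r) / 2) '' K) := by
    intro K r
    have : (fun x : ℝ => (x + r) / 2) '' K = (1 / 2 : ℝ) • ((fun x => x + r) '' K) := by
      rw [← Set.image_smul, Set.image_image]
      congr 1
      ext x
      simp only [smul_eq_mul]
      ring
    rw [this, Measure.addHaar_smul, Set.image_add_right, measure_preimage_add_right,
      ← mul_assoc]
    have e : (2 : ℝ≥0∞) * ENNReal.ofReal |(1 / 2 : ℝ) ^ Module.finrank ℝ ℝ| = 1 := by
      rw [show (2 : ℝ≥0∞) = ENNReal.ofReal 2 by simp, ← ENNReal.ofReal_mul (by norm_num)]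
      norm_num
    rw [e, one_mul]
  have key : ∀ K ⊆ A, IsCompact K → ∀ L ⊆ B, IsCompact L →
      volume K + volume L ≤ 2 * volume S := by
    intro K hKA hK L hLB hL
    obtain ⟨a₀, ha₀⟩ := hA0
    obtain ⟨b₀, hb₀⟩ := hB0
    have hK' := hK.insert a₀
    have hL' := hL.insert b₀
    have hKA' : insert a₀ K ⊆ A := Set.insert_subset ha₀ hKA
    have hLB' : insert b₀ L ⊆ B := Set.insert_subset hb₀ hLB
    obtain ⟨p, hpK, hp⟩ := hK'.exists_isGreatest (Set.insert_nonempty _ _)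
    obtain ⟨q, hqL, hq⟩ := hL'.exists_isLeast (Set.insert_nonempty _ _)
    set X := (fun x => (x + q) / 2) '' insert a₀ K
    set Y := (fun x => (x + p) / 2) '' insert b₀ L
    have hX : X ⊆ S := by
      rintro _ ⟨x, hx, rfl⟩
      exact h x (hKA' hx) q (hLB' hqL)
    have hY : Y ⊆ S := by
      rintro _ ⟨x, hx, rfl⟩
      have := h p (hKA' hpK) x (hLB' hx)
      rwa [add_comm] at this
    have hYm : MeasurableSet Y := (hL'.image (by fun_prop)).measurableSet
    have hd : AEDisjoint volume X Y := by
      refine measure_mono_null (t := {(p + q) / 2}) ?_ (by simp)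
      rintro z ⟨⟨x, hx, rfl⟩, ⟨y, hy, hxy⟩⟩
      have h1 := hp hx
      have h2 := hq hy
      simp only [Set.mem_singleton_iff] at hxy ⊢
      linarith
    calc volume K + volume L ≤ volume (insert a₀ K) + volume (insert b₀ L) :=
          add_le_add (measure_mono (Set.subset_insert _ _)) (measure_mono (Set.subset_insert _ _))
      _ = 2 * (volume X + volume Y) := by rw [half (insert a₀ K) q, half (insert b₀ L) p, mul_add]
      _ = 2 * volume (X ∪ Y) := by rw [measure_union₀ hYm.nullMeasurableSet hd]
      _ ≤ 2 * volume S := by gcongr; exact Set.union_subset hX hY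
  rw [hA.measure_eq_iSup_isCompact volume, hB.measure_eq_iSup_isCompact volume]
  simp only [iSup_and']
  exact ENNReal.biSup_add_biSup_le' ⟨∅, by simp⟩ ⟨∅, by simp⟩
    fun K hK L hL => key K hK.1 hK.2 L hL.1 hL.2

/-- Prékopa–Leindler on the line in its additive form, for bounded functions with a common
supremum `M`: below the level `M` the superlevel sets of `F` and `G` are nonempty and their
half-sum lies in that of `H`, so `volume_halfsum` applies level by level. -/
lemma pl_same_sup {F G H : ℝ → ℝ} (hF : Measurable F) (hG : Measurable G) (hH : Measurable H)
    (hF0 : ∀ x, 0 ≤ F x) (hG0 : ∀ x, 0 ≤ G x) (hH0 : ∀ x, 0 ≤ H x) {M : ℝ}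
    (hFM : ∀ x, F x ≤ M) (hGM : ∀ x, G x ≤ M)
    (hFs : ∀ t < M, ∃ x, t < F x) (hGs : ∀ t < M, ∃ x, t < G x)
    (h : ∀ x y, F x * G y ≤ H ((x + y) / 2) ^ 2) :
    (∫⁻ x, ENNReal.ofReal (F x)) + (∫⁻ x, ENNReal.ofReal (G x))
      ≤ 2 * ∫⁻ x, ENNReal.ofReal (H x) := by
  rw [lintegral_eq_lintegral_meas_lt _ (.of_forall hF0) hF.aemeasurable,
    lintegral_eq_lintegral_meas_lt _ (.of_forall hG0) hG.aemeasurable,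
    lintegral_eq_lintegral_meas_lt _ (.of_forall hH0) hH.aemeasurable,
    ← lintegral_const_mul' _ _ (by simp), ← lintegral_add_left']
  · refine setLIntegral_mono' measurableSet_Ioi fun t ht => ?_
    by_cases htM : t < M
    · refine volume_halfsum (hF measurableSet_Ioi) (hG measurableSet_Ioi) (hFs t htM) (hGs t htM) ?_
      intro a ha b hb
      simp only [Set.mem_Ioi, Set.mem_ofPred_eq] at *
      by_contra! hcon
      have := h a b
      nlinarith [hH0 ((a + b) / 2), mul_pos ht ht]
    · have e1 : {a | t < F a} = ∅ := by
        ext x; simpa using (hFM x).trans (not_lt.1 htM)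
      have e2 : {a | t < G a} = ∅ := by
        ext x; simpa using (hGM x).trans (not_lt.1 htM)
      simp [e1, e2]
  · have : Antitone fun t : ℝ => volume {a | t < F a} := fun s t hst =>
      measure_mono fun x (hx : t < F x) => lt_of_le_of_lt hst hx
    exact this.measurable.aemeasurable

/-- Prékopa–Leindler on the line for bounded functions. Rescaling `f` and `g` to a common supremum
and applying the AM-GM inequality turns the additive form into the multiplicative one. -/
lemma pl_bounded {f g h : ℝ → ℝ≥0∞} (hf : Measurable f) (hg : Measurable g) (hh : Measurable h)
    {m : ℝ≥0∞} (hm : m ≠ ∞) (hfm : ∀ x, f x ≤ m) (hgm : ∀ x, g x ≤ m) (hhm : ∀ x, h x ≤ m)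
    (H : ∀ x y, f x * g y ≤ h ((x + y) / 2) ^ 2) :
    (∫⁻ x, f x) * ∫⁻ x, g x ≤ (∫⁻ x, h x) ^ 2 := by
  have lf : ∀ k : ℝ → ℝ≥0∞, (∀ x, k x ≤ m) → ∃ K : ℝ → ℝ, (∀ x, k x = ENNReal.ofReal (K x)) ∧
      (∀ x, K x = (k x).toReal) := fun k hk =>
    ⟨fun x => (k x).toReal,
      fun x => (ENNReal.ofReal_toReal (ne_top_of_le_ne_top hm (hk x))).symm, fun _ => rfl⟩
  obtain ⟨F, hF, hF'⟩ := lf f hfm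
  obtain ⟨G, hG, hG'⟩ := lf g hgm
  obtain ⟨K, hK, hK'⟩ := lf h hhm
  have mF : Measurable F := by rw [funext hF']; exact hf.ennreal_toReal
  have mG : Measurable G := by rw [funext hG']; exact hg.ennreal_toReal
  have mK : Measurable K := by rw [funext hK']; exact hh.ennreal_toReal
  have F0 : ∀ x, 0 ≤ F x := fun x => by rw [hF']; positivity
  have G0 : ∀ x, 0 ≤ G x := fun x => by rw [hG']; positivity
  have K0 : ∀ x, 0 ≤ K x := fun x => by rw [hK']; positivity
  have bF : BddAbove (Set.range F) := ⟨m.toReal, by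
    rintro _ ⟨x, rfl⟩; rw [hF']; exact ENNReal.toReal_mono hm (hfm x)⟩
  have bG : BddAbove (Set.range G) := ⟨m.toReal, by
    rintro _ ⟨x, rfl⟩; rw [hG']; exact ENNReal.toReal_mono hm (hgm x)⟩
  have HR : ∀ x y, F x * G y ≤ K ((x + y) / 2) ^ 2 := by
    intro x y
    have := ENNReal.toReal_mono
      (ENNReal.pow_ne_top (ne_top_of_le_ne_top hm (hhm ((x + y) / 2)))) (H x y)
    rwa [ENNReal.toReal_mul, ENNReal.toReal_pow, ← hF', ← hG', ← hK'] at this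
  set a := ⨆ x, F x with ha
  set b := ⨆ x, G x with hb
  have ha0 : 0 ≤ a := Real.iSup_nonneg F0
  have hb0 : 0 ≤ b := Real.iSup_nonneg G0
  rcases ha0.eq_or_lt with ha1 | ha1
  · have : ∀ x, f x = 0 := fun x => by
      rw [hF, ENNReal.ofReal_eq_zero, ha1]; exact le_ciSup bF x
    simp [this]
  rcases hb0.eq_or_lt with hb1 | hb1
  · have : ∀ x, g x = 0 := fun x => by
      rw [hG, ENNReal.ofReal_eq_zero, hb1]; exact le_ciSup bG x
    simp [this]
  set α := Real.sqrt a with hα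
  set β := Real.sqrt b with hβ
  have hα0 : 0 < α := Real.sqrt_pos.2 ha1
  have hβ0 : 0 < β := Real.sqrt_pos.2 hb1
  have hαa : α * α = a := Real.mul_self_sqrt ha0
  have hβb : β * β = b := Real.mul_self_sqrt hb0
  -- rescaling by reciprocal factors equalizes the suprema and preserves the product
  have main := pl_same_sup (F := fun x => β / α * F x) (G := fun x => α / β * G x) (H := K)
    (M := α * β) (mF.const_mul _) (mG.const_mul _) mK
    (fun x => mul_nonneg (by positivity) (F0 x)) (fun x => mul_nonneg (by positivity) (G0 x)) K0
    (fun x => by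
      calc β / α * F x ≤ β / α * a := by gcongr; exact le_ciSup bF x
        _ = α * β := by rw [← hαa]; field_simp)
    (fun x => by
      calc α / β * G x ≤ α / β * b := by gcongr; exact le_ciSup bG x
        _ = α * β := by rw [← hβb]; field_simp)
    (fun t ht => by
      obtain ⟨x, hx⟩ := exists_lt_of_lt_ciSup (f := F) (b := α / β * t) (by
        rw [← ha, ← hαa]
        calc α / β * t < α / β * (α * β) := by gcongr
          _ = α * α := by field_simp)
      refine ⟨x, ?_⟩
      calc t = β / α * (α / β * t) := by field_simp
        _ < _ := by gcongr)
    (fun t ht => by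
      obtain ⟨x, hx⟩ := exists_lt_of_lt_ciSup (f := G) (b := β / α * t) (by
        rw [← hb, ← hβb]
        calc β / α * t < β / α * (α * β) := by gcongr
          _ = β * β := by field_simp)
      refine ⟨x, ?_⟩
      calc t = α / β * (β / α * t) := by field_simp
        _ < _ := by gcongr)
    (fun x y => by
      calc β / α * F x * (α / β * G y) = F x * G y := by field_simp
        _ ≤ _ := HR x y)
  simp only [ENNReal.ofReal_mul (show 0 ≤ β / α by positivity),
    ENNReal.ofReal_mul (show 0 ≤ α / β by positivity), ← hF, ← hG, ← hK] at main
  rw [lintegral_const_mul _ hf, lintegral_const_mul _ hg] at main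
  set P := ∫⁻ x, f x
  set Q := ∫⁻ x, g x
  set R := ∫⁻ x, h x
  have amgm : ∀ u v : ℝ≥0∞, 4 * (u * v) ≤ (u + v) ^ 2 := by
    intro u v
    by_cases hu : u = ∞
    · subst hu; simp
    by_cases hv : v = ∞
    · subst hv; simp
    lift u to NNReal using hu
    lift v to NNReal using hv
    norm_cast
    rw [← NNReal.coe_le_coe]
    push_cast
    nlinarith [sq_nonneg ((u : ℝ) - v)]
  have hone : ENNReal.ofReal (β / α) * ENNReal.ofReal (α / β) = 1 := by
    rw [← ENNReal.ofReal_mul (by positivity)]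
    rw [show β / α * (α / β) = 1 by field_simp]; simp
  have h4 : 4 * (P * Q) ≤ 4 * R ^ 2 := by
    calc 4 * (P * Q) = 4 * ((ENNReal.ofReal (β / α) * P) * (ENNReal.ofReal (α / β) * Q)) := by
          rw [mul_mul_mul_comm, hone, one_mul]
      _ ≤ _ := amgm _ _
      _ ≤ (2 * R) ^ 2 := by gcongr
      _ = 4 * R ^ 2 := by ring
  exact (ENNReal.mul_le_mul_iff_right (by simp) (by simp)).1 h4

/-- Prékopa–Leindler on the line with weights `1 / 2`, by truncation at integer heights. -/
lemma pl_one {f g h : ℝ → ℝ≥0∞} (hf : Measurable f) (hg : Measurable g) (hh : Measurable h)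
    (H : ∀ x y, f x * g y ≤ h ((x + y) / 2) ^ 2) :
    (∫⁻ x, f x) * ∫⁻ x, g x ≤ (∫⁻ x, h x) ^ 2 := by
  have trunc : ∀ m : ℕ, (∫⁻ x, min (f x) m) * ∫⁻ x, min (g x) m ≤ (∫⁻ x, h x) ^ 2 := by
    intro m
    refine (pl_bounded (h := fun x => min (h x) m) (m := m) (hf.min measurable_const)
      (hg.min measurable_const) (hh.min measurable_const) (by simp) (fun x => min_le_right _ _)
      (fun x => min_le_right _ _) (fun x => min_le_right _ _) ?_).trans ?_
    · intro x y
      rcases min_cases (h ((x + y) / 2)) (m : ℝ≥0∞) with ⟨e, -⟩ | ⟨e, -⟩ <;> rw [e]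
      · exact (mul_le_mul' (min_le_left _ _) (min_le_left _ _)).trans (H x y)
      · rw [sq]; exact mul_le_mul' (min_le_right _ _) (min_le_right _ _)
    · gcongr
      exact min_le_left _ _
  have sup : ∀ k : ℝ → ℝ≥0∞, Measurable k →
      ∫⁻ x, k x = ⨆ m : ℕ, ∫⁻ x, min (k x) m := by
    intro k hk
    rw [← lintegral_iSup (fun m => hk.min measurable_const)]
    · congr 1; ext x
      rw [← inf_iSup_eq, ENNReal.iSup_natCast]; simp
    · intro i j hij x
      dsimp only
      gcongr
  rw [sup f hf, sup g hg, ENNReal.iSup_mul]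
  refine iSup_le fun i => ?_
  rw [ENNReal.mul_iSup]
  refine iSup_le fun j => le_trans ?_ (trunc (max i j))
  gcongr <;> simp

/-- Prékopa–Leindler inequality on `ℝⁿ` with weights `1 / 2`. Integrating out all coordinates but
the first preserves the hypothesis, by induction on the dimension. -/
theorem pl_pi (n : ℕ) {f g h : (Fin n → ℝ) → ℝ≥0∞} (hf : Measurable f) (hg : Measurable g)
    (hh : Measurable h) (H : ∀ x y, f x * g y ≤ h ((1 / 2 : ℝ) • (x + y)) ^ 2) :
    (∫⁻ x, f x) * ∫⁻ x, g x ≤ (∫⁻ x, h x) ^ 2 := by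
  induction n with
  | zero =>
    have e : ∀ k : (Fin 0 → ℝ) → ℝ≥0∞, ∫⁻ x, k x = k 0 := by
      intro k
      rw [lintegral_unique, volume_pi, Measure.pi_empty_univ, mul_one]
      exact congrArg k (Subsingleton.elim _ _)
    rw [e, e, e]
    simpa using H 0 0
  | succ n ih =>
    have mp := (volume_preserving_piFinSuccAbove (fun _ : Fin (n + 1) => ℝ) 0).symm
    have hcons : ∀ p : ℝ × (Fin n → ℝ),
        (MeasurableEquiv.piFinSuccAbove (fun _ : Fin (n + 1) => ℝ) 0).symm p
          = Fin.cons p.1 p.2 := fun p => by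
      simp [MeasurableEquiv.piFinSuccAbove, Fin.consEquiv]
    have e : ∀ k : (Fin (n + 1) → ℝ) → ℝ≥0∞, Measurable k →
        ∫⁻ x, k x = ∫⁻ s : ℝ, ∫⁻ y : Fin n → ℝ, k (Fin.cons s y) := by
      intro k hk
      rw [← mp.lintegral_comp hk, Measure.volume_eq_prod, lintegral_prod _ (by
        exact (hk.comp mp.measurable).aemeasurable)]
      simp only [hcons]
    have mc : Measurable fun p : ℝ × (Fin n → ℝ) => (Fin.cons p.1 p.2 : Fin (n + 1) → ℝ) := by
      simpa only [← hcons] using mp.measurable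
    have mk : ∀ k : (Fin (n + 1) → ℝ) → ℝ≥0∞, Measurable k →
        Measurable fun s : ℝ => ∫⁻ y : Fin n → ℝ, k (Fin.cons s y) := fun k hk =>
      Measurable.lintegral_prod_right' (f := fun p : ℝ × (Fin n → ℝ) => k (Fin.cons p.1 p.2))
        (hk.comp mc)
    have mk' : ∀ k : (Fin (n + 1) → ℝ) → ℝ≥0∞, Measurable k → ∀ s : ℝ,
        Measurable fun y : Fin n → ℝ => k (Fin.cons s y) := fun k hk s =>
      hk.comp (mc.comp (by fun_prop : Measurable fun y : Fin n → ℝ => (s, y)))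
    rw [e f hf, e g hg, e h hh]
    refine pl_one (mk f hf) (mk g hg) (mk h hh) fun s t => ?_
    refine ih (mk' f hf s) (mk' g hg t) (mk' h hh _) fun x y => ?_
    refine (H (Fin.cons s x) (Fin.cons t y)).trans_eq ?_
    congr 2
    ext i
    refine Fin.cases ?_ (fun i => ?_) i <;> simp <;> ring

end PrekopaLeindler

/-! ### Scalar inequalities and linearity of integrals -/

/-- Comparison of the slopes at `τ = 0` of two functions of `τ` that both vanish there. -/
lemma le_of_mul_le_exp {D K q : ℝ}
    (h : ∀ τ : ℝ, 0 < τ → D * τ ≤ K * (Real.exp (τ * q) - 1)) : D ≤ K * q := by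
  have hd : HasDerivAt (fun τ : ℝ => K * (Real.exp (τ * q) - 1)) (K * q) 0 := by
    have := ((((hasDerivAt_id (0 : ℝ)).mul_const q).exp).sub_const 1).const_mul K
    simpa using this
  refine ge_of_tendsto hd.tendsto_slope_zero_right ?_
  filter_upwards [self_mem_nhdsWithin] with τ hτ
  have hτ' : 0 < τ := hτ
  rw [smul_eq_mul, inv_mul_eq_div, le_div_iff₀ hτ']
  simpa using h τ hτ'

lemma two_add_sq_le_exp_add_exp (t : ℝ) : 2 + t ^ 2 ≤ Real.exp t + Real.exp (-t) := by
  wlog ht : 0 ≤ t generalizing t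
  · have := this (-t) (by linarith)
    rw [neg_neg] at this
    linarith
  -- `2 (cosh t - 1) = (2 sinh (t / 2)) ^ 2` and `sinh s ≥ s`
  have h1 : t / 2 ≤ Real.sinh (t / 2) := Real.self_le_sinh_iff.2 (by linarith)
  have h2 : Real.exp t + Real.exp (-t) = 2 * Real.cosh (2 * (t / 2)) := by
    rw [Real.cosh_eq]; ring_nf
  rw [h2, Real.cosh_two_mul, Real.cosh_sq]
  nlinarith

section linear

variable {α β : Type*} [MeasurableSpace α] [MeasurableSpace β] {μ : Measure α} {ν : Measure β}
  {φ ψ : α → ℝ} {p q : ℝ}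

/-! Integrability and the value of the integral are carried together, so that the integral of a
linear combination is computed by composing the next four lemmas. -/

lemma hasInt_add (h : Integrable φ μ ∧ ∫ x, φ x ∂μ = p) (k : Integrable ψ μ ∧ ∫ x, ψ x ∂μ = q) :
    Integrable (fun x => φ x + ψ x) μ ∧ ∫ x, φ x + ψ x ∂μ = p + q :=
  ⟨h.1.add k.1, by rw [integral_add h.1 k.1, h.2, k.2]⟩

lemma hasInt_sub (h : Integrable φ μ ∧ ∫ x, φ x ∂μ = p) (k : Integrable ψ μ ∧ ∫ x, ψ x ∂μ = q) :
    Integrable (fun x => φ x - ψ x) μ ∧ ∫ x, φ x - ψ x ∂μ = p - q :=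
  ⟨h.1.sub k.1, by rw [integral_sub h.1 k.1, h.2, k.2]⟩

lemma hasInt_smul (c : ℝ) (h : Integrable φ μ ∧ ∫ x, φ x ∂μ = p) :
    Integrable (fun x => c * φ x) μ ∧ ∫ x, c * φ x ∂μ = c * p :=
  ⟨h.1.const_mul c, by rw [integral_const_mul, h.2]⟩

lemma hasInt_prod [SFinite μ] [SFinite ν] {ψ : β → ℝ} (h : Integrable φ μ ∧ ∫ x, φ x ∂μ = p)
    (k : Integrable ψ ν ∧ ∫ x, ψ x ∂ν = q) :
    Integrable (fun z : α × β => φ z.1 * ψ z.2) (μ.prod ν) ∧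
      ∫ z, φ z.1 * ψ z.2 ∂(μ.prod ν) = p * q :=
  ⟨h.1.mul_prod k.1, by rw [integral_prod_mul, h.2, k.2]⟩

end linear

/-! ### Variance bounds from second differences -/

section core

variable {N : ℕ} {V : (Fin N → ℝ) → ℝ} (hV : Continuous V)
  (hI : ∀ b : Fin N → ℝ, Integrable fun x => Real.exp (-V x + ∑ i, b i * x i))

include hI in
lemma integrable_tilt (u : Fin N → ℝ) (μ s : ℝ) :
    Integrable fun x => Real.exp (-V x) * Real.exp (s * (∑ i, u i * x i - μ)) := by
  refine ((hI fun i => s * u i).const_mul (Real.exp (-(s * μ)))).congr (.of_forall fun x => ?_)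
  dsimp only
  rw [← Real.exp_add, ← Real.exp_add, mul_sub, Finset.mul_sum]
  congr 1
  simp only [mul_assoc]
  ring

include hI in
lemma integrable_weight : Integrable fun x => Real.exp (-V x) := by
  simpa using hI 0

include hV hI in
/-- Continuous functions dominated by `2 cosh` of an affine function are integrable for the weight
`exp (-V)`. -/
lemma integrable_of_le {φ : (Fin N → ℝ) → ℝ} (hφ : Continuous φ) (u : Fin N → ℝ) (μ : ℝ)
    (h : ∀ x, |φ x| ≤ Real.exp (∑ i, u i * x i - μ) + Real.exp (-(∑ i, u i * x i - μ))) :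
    Integrable fun x => Real.exp (-V x) * φ x := by
  refine ((integrable_tilt hI u μ 1).add (integrable_tilt hI u μ (-1))).mono'
    (by fun_prop) (.of_forall fun x => ?_)
  rw [Real.norm_eq_abs, abs_mul, abs_of_pos (Real.exp_pos _), Pi.add_apply, ← mul_add, one_mul,
    neg_one_mul]
  gcongr
  exact h x

include hV hI in
lemma integrable_sq (u : Fin N → ℝ) (μ : ℝ) :
    Integrable fun x => Real.exp (-V x) * (∑ i, u i * x i - μ) ^ 2 := by
  refine integrable_of_le hV hI (by fun_prop) u μ fun x => ?_
  rw [abs_of_nonneg (sq_nonneg _)]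
  linarith [two_add_sq_le_exp_add_exp (∑ i, u i * x i - μ)]

include hV hI in
lemma integrable_lin (u : Fin N → ℝ) (μ : ℝ) :
    Integrable fun x => Real.exp (-V x) * (∑ i, u i * x i - μ) := by
  refine integrable_of_le hV hI (by fun_prop) u μ fun x => ?_
  refine le_trans ?_ (two_add_sq_le_exp_add_exp (∑ i, u i * x i - μ))
  rw [abs_le]
  constructor <;> nlinarith [sq_nonneg (∑ i, u i * x i - μ + 1), sq_nonneg (∑ i, u i * x i - μ - 1)]

include hV hI in
/-- Exponential moment bound: if `V` has second differences at least `∑ lᵢ hᵢ²`, the integrals of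
the weight `exp (-V)` tilted by `exp (± s (u ⬝ x - μ))` have product at most
`Z² exp (s² ∑ uᵢ² / lᵢ)`. This is `pl_pi` applied to the two tilted weights and a multiple of
`exp (-V)`. -/
lemma tilt_mul_le {l : Fin N → ℝ} (hl : ∀ i, 0 < l i)
    (hL : ∀ x h, 2 * V x + ∑ i, l i * h i ^ 2 ≤ V (x + h) + V (x - h))
    (u : Fin N → ℝ) (μ s : ℝ) :
    (∫ x, Real.exp (-V x) * Real.exp (s * (∑ i, u i * x i - μ))) *
      (∫ x, Real.exp (-V x) * Real.exp (-s * (∑ i, u i * x i - μ))) ≤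
    (∫ x, Real.exp (-V x)) ^ 2 * Real.exp (s ^ 2 * ∑ i, u i ^ 2 / l i) := by
  set q := ∑ i, u i ^ 2 / l i with hq
  set t : (Fin N → ℝ) → ℝ := fun x => ∑ i, u i * x i - μ with ht
  have htc : Continuous t := by fun_prop
  have pt : ∀ x y, -V x + s * t x + (-V y + -s * t y)
      ≤ 2 * -V ((1 / 2 : ℝ) • (x + y)) + s ^ 2 * q := by
    intro x y
    have h1 := hL ((1 / 2 : ℝ) • (x + y)) ((1 / 2 : ℝ) • (x - y))
    rw [show (1 / 2 : ℝ) • (x + y) + (1 / 2 : ℝ) • (x - y) = x by ext i; simp; ring,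
      show (1 / 2 : ℝ) • (x + y) - (1 / 2 : ℝ) • (x - y) = y by ext i; simp; ring] at h1
    have h2 : s * (t x - t y) ≤
        ∑ i, l i * ((1 / 2 : ℝ) • (x - y)) i ^ 2 + s ^ 2 * q := by
      have e : t x - t y = ∑ i, u i * (x i - y i) := by
        simp only [ht, mul_sub, Finset.sum_sub_distrib]; ring
      rw [e, hq, Finset.mul_sum, Finset.mul_sum, ← Finset.sum_add_distrib]
      refine Finset.sum_le_sum fun i _ => ?_
      have hli := hl i
      -- completing the square, coordinate by coordinate
      have : l i * ((1 / 2 : ℝ) • (x - y)) i ^ 2 + s ^ 2 * (u i ^ 2 / l i)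
          - s * (u i * (x i - y i)) = (l i * ((x i - y i) / 2) - s * u i) ^ 2 / l i := by
        simp only [Pi.smul_apply, Pi.sub_apply, smul_eq_mul]
        field_simp
        ring
      have : 0 ≤ (l i * ((x i - y i) / 2) - s * u i) ^ 2 / l i := by positivity
      linarith
    linarith
  have conv : ∀ φ : (Fin N → ℝ) → ℝ, (∀ x, 0 ≤ φ x) → Integrable φ →
      ENNReal.ofReal (∫ x, φ x) = ∫⁻ x, ENNReal.ofReal (φ x) := fun φ h0 hi =>
    ofReal_integral_eq_lintegral_ofReal hi (.of_forall h0)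
  have P := pl_pi N (f := fun x => ENNReal.ofReal (Real.exp (-V x) * Real.exp (s * t x)))
    (g := fun x => ENNReal.ofReal (Real.exp (-V x) * Real.exp (-s * t x)))
    (h := fun x => ENNReal.ofReal (Real.exp (s ^ 2 * q / 2) * Real.exp (-V x)))
    (by fun_prop) (by fun_prop) (by fun_prop) (fun x y => by
      rw [← ENNReal.ofReal_mul (by positivity), ← ENNReal.ofReal_pow (by positivity)]
      refine ENNReal.ofReal_le_ofReal ?_
      rw [← Real.exp_add, ← Real.exp_add, ← Real.exp_add, ← Real.exp_add, ← Real.exp_nat_mul]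
      refine Real.exp_le_exp.2 ((pt x y).trans_eq ?_)
      push_cast
      ring)
  rw [← conv _ (fun x => by positivity) (integrable_tilt hI u μ s),
    ← conv _ (fun x => by positivity) (integrable_tilt hI u μ (-s)),
    ← conv _ (fun x => by positivity) ((integrable_weight hI).const_mul _),
    ← ENNReal.ofReal_mul (integral_nonneg fun x => by positivity),
    ← ENNReal.ofReal_pow (integral_nonneg fun x => by positivity),
    ENNReal.ofReal_le_ofReal_iff (by positivity), integral_const_mul] at P
  refine P.trans_eq ?_
  rw [mul_pow, ← Real.exp_nat_mul, mul_comm]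
  congr 2
  push_cast
  ring

include hV hI in
/-- Upper variance bound of Brascamp–Lieb type, in unnormalized form. It is the second-order term
of `tilt_mul_le` as `s → 0`; the inequality `2 + t² ≤ 2 cosh t`, applied to differences of two
independent copies, replaces a Taylor expansion under the integral sign. -/
theorem var_le {l : Fin N → ℝ} (hl : ∀ i, 0 < l i)
    (hL : ∀ x h, 2 * V x + ∑ i, l i * h i ^ 2 ≤ V (x + h) + V (x - h))
    (u : Fin N → ℝ) (μ : ℝ)
    (hμ : ∫ x, Real.exp (-V x) * (∑ i, u i * x i - μ) = 0)
    (hZ : 0 < ∫ x, Real.exp (-V x)) :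
    ∫ x, Real.exp (-V x) * (∑ i, u i * x i - μ) ^ 2 ≤
      (∫ x, Real.exp (-V x)) * ∑ i, u i ^ 2 / l i := by
  set q := ∑ i, u i ^ 2 / l i with hq
  have i0 := integrable_weight hI
  have i1 := integrable_lin hV hI u μ
  have i2 := integrable_sq hV hI u μ
  set Z := ∫ x, Real.exp (-V x) with hZd
  set A := ∫ x, Real.exp (-V x) * (∑ i, u i * x i - μ) ^ 2 with hA
  have key : ∀ τ : ℝ, 0 < τ → Z * A * τ ≤ Z ^ 2 * (Real.exp (τ * q) - 1) := by
    intro τ hτ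
    obtain ⟨s, rfl⟩ : ∃ s : ℝ, τ = s ^ 2 := ⟨√τ, (Real.sq_sqrt hτ.le).symm⟩
    have ip := integrable_tilt hI u μ s
    have im := integrable_tilt hI u μ (-s)
    have hT := tilt_mul_le hV hI hl hL u μ s
    set w : (Fin N → ℝ) → ℝ := fun x => Real.exp (-V x) with hw
    set t : (Fin N → ℝ) → ℝ := fun x => ∑ i, u i * x i - μ with htd
    -- symmetrize the product of the two tilted integrals over pairs of points, so that only
    -- differences `t x - t y` occur in the exponents
    have J0 : Integrable w ∧ ∫ x, w x = Z := ⟨i0, rfl⟩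
    have J1 : Integrable (fun x => w x * t x) ∧ ∫ x, w x * t x = 0 := ⟨i1, hμ⟩
    have J2 : Integrable (fun x => w x * t x ^ 2) ∧ ∫ x, w x * t x ^ 2 = A := ⟨i2, rfl⟩
    have Jp : Integrable (fun x => w x * Real.exp (s * t x)) ∧
      ∫ x, w x * Real.exp (s * t x) = ∫ x, w x * Real.exp (s * t x) := ⟨ip, rfl⟩
    have Jm : Integrable (fun x => w x * Real.exp (-s * t x)) ∧
      ∫ x, w x * Real.exp (-s * t x) = ∫ x, w x * Real.exp (-s * t x) := ⟨im, rfl⟩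
    have E1 := hasInt_add (hasInt_prod Jp Jm) (hasInt_prod Jm Jp)
    have E2 := hasInt_add (hasInt_smul 2 (hasInt_prod J0 J0)) (hasInt_smul (s ^ 2)
      (hasInt_add (hasInt_sub (hasInt_prod J2 J0) (hasInt_smul 2 (hasInt_prod J1 J1)))
        (hasInt_prod J0 J2)))
    have le : 2 * (Z * Z) + s ^ 2 * (A * Z - 2 * (0 * 0) + Z * A) ≤
        (∫ x, w x * Real.exp (s * t x)) * (∫ x, w x * Real.exp (-s * t x)) +
        (∫ x, w x * Real.exp (-s * t x)) * ∫ x, w x * Real.exp (s * t x) := by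
      rw [← E1.2, ← E2.2]
      refine integral_mono E2.1 E1.1 fun z => ?_
      have h := two_add_sq_le_exp_add_exp (s * (t z.1 - t z.2))
      have hw0 : 0 < w z.1 * w z.2 := mul_pos (Real.exp_pos _) (Real.exp_pos _)
      have h' := mul_le_mul_of_nonneg_left h hw0.le
      have x1 : Real.exp (s * (t z.1 - t z.2)) = Real.exp (s * t z.1) * Real.exp (-s * t z.2) := by
        rw [← Real.exp_add]; ring_nf
      have x2 : Real.exp (-(s * (t z.1 - t z.2))) =
          Real.exp (-s * t z.1) * Real.exp (s * t z.2) := by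
        rw [← Real.exp_add]; ring_nf
      rw [x1, x2] at h'
      dsimp only
      linarith
    have hT' : (∫ x, w x * Real.exp (s * t x)) * ∫ x, w x * Real.exp (-s * t x)
      ≤ Z ^ 2 * Real.exp (s ^ 2 * q) := hT
    nlinarith
  have := le_of_mul_le_exp key
  have h2 : Z * A ≤ Z * (Z * q) := by linarith
  exact le_of_mul_le_mul_left h2 hZ

include hV hI in
/-- Lower variance bound of Cramér–Rao type, in unnormalized form. It is obtained from the
Chapman–Robbins inequality for the translates of `exp (-V)` by `s M⁻¹ u`, as `s → 0`, so no
integration by parts occurs. -/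
theorem le_var {M : Fin N → ℝ} (hM : ∀ i, 0 < M i)
    (hU : ∀ x h, V (x + h) + V (x - h) ≤ 2 * V x + ∑ i, M i * h i ^ 2)
    (u : Fin N → ℝ) (μ : ℝ)
    (hμ : ∫ x, Real.exp (-V x) * (∑ i, u i * x i - μ) = 0) :
    (∫ x, Real.exp (-V x)) * ∑ i, u i ^ 2 / M i ≤
      ∫ x, Real.exp (-V x) * (∑ i, u i * x i - μ) ^ 2 := by
  set q := ∑ i, u i ^ 2 / M i with hq
  have i0 := integrable_weight hI
  have i1 := integrable_lin hV hI u μ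
  have i2 := integrable_sq hV hI u μ
  set Z := ∫ x, Real.exp (-V x) with hZd
  set A := ∫ x, Real.exp (-V x) * (∑ i, u i * x i - μ) ^ 2 with hA
  have key : ∀ τ : ℝ, 0 < τ → (2 * (Z * q) - A) * τ ≤ Z * (Real.exp (τ * q) - 1) := by
    intro τ hτ
    obtain ⟨s, hs, rfl⟩ : ∃ s : ℝ, 0 < s ∧ τ = s ^ 2 :=
      ⟨√τ, Real.sqrt_pos.2 hτ, (Real.sq_sqrt hτ.le).symm⟩
    set w : (Fin N → ℝ) → ℝ := fun x => Real.exp (-V x) with hw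
    set t : (Fin N → ℝ) → ℝ := fun x => ∑ i, u i * x i - μ with htd
    -- the direction `M⁻¹ u` is the one for which Cauchy–Schwarz is sharp
    set a : Fin N → ℝ := fun i => s * (u i / M i) with ha
    have hta : ∀ x, t x = t (x + a) - s * q := by
      intro x
      have : ∑ i, u i * a i = s * q := by
        rw [hq, Finset.mul_sum]
        refine Finset.sum_congr rfl fun i _ => ?_
        simp only [ha]; ring
      simp only [htd, Pi.add_apply, mul_add, Finset.sum_add_distrib, this]
      ring
    have hMa : ∑ i, M i * a i ^ 2 = s ^ 2 * q := by
      rw [hq, Finset.mul_sum]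
      refine Finset.sum_congr rfl fun i _ => ?_
      have := hM i
      simp only [ha]
      field_simp
    have j0 : Integrable fun x => w (x + a) := i0.comp_add_right a
    have k1 : Integrable fun x => w x * t x - (s * q) * w x := i1.sub (i0.const_mul _)
    have j1e : (fun x => t x * w (x + a)) =
        fun x => (fun y => w y * t y - (s * q) * w y) (x + a) := by
      ext x
      rw [hta x]; ring
    have j1 : Integrable fun x => t x * w (x + a) := by
      rw [j1e]; exact k1.comp_add_right a
    have v1 : ∫ x, t x * w (x + a) = -(s * q * Z) := by
      rw [j1e, integral_add_right_eq_self (fun y => w y * t y - (s * q) * w y) a,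
        integral_sub i1 (i0.const_mul _), integral_const_mul, hμ]
      ring
    have v0 : ∫ x, w (x + a) = Z := integral_add_right_eq_self w a
    -- the chi-square integrand is dominated by a further translate of the density
    have dom : ∀ x, w (x + a) ^ 2 / w x ≤ Real.exp (s ^ 2 * q) * w (x + (a + a)) := by
      intro x
      simp only [hw]
      rw [← Real.exp_nat_mul, ← Real.exp_sub, ← Real.exp_add]
      refine Real.exp_le_exp.2 ?_
      have := hU (x + a) a
      rw [add_sub_cancel_right, add_assoc, hMa] at this
      push_cast
      linarith
    have j2d : Integrable fun x => Real.exp (s ^ 2 * q) * w (x + (a + a)) :=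
      (i0.comp_add_right (a + a)).const_mul _
    have j2 : Integrable fun x => w (x + a) ^ 2 / w x := by
      refine j2d.mono' ?_ (.of_forall fun x => ?_)
      · refine Continuous.aestronglyMeasurable ?_
        exact Continuous.div (by fun_prop) (by fun_prop) fun x => (Real.exp_pos _).ne'
      · rw [Real.norm_of_nonneg (div_nonneg (sq_nonneg _) (Real.exp_pos _).le)]
        exact dom x
    have v2 : ∫ x, w (x + a) ^ 2 / w x ≤ Z * Real.exp (s ^ 2 * q) := by
      refine (integral_mono j2 j2d dom).trans_eq ?_
      rw [integral_const_mul, integral_add_right_eq_self w (a + a), mul_comm]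
    have E := hasInt_add (hasInt_sub (hasInt_add (hasInt_smul (s ^ 2) (φ := fun x => w x * t x ^ 2)
      ⟨i2, rfl⟩) (hasInt_smul (2 * s) ⟨j1, v1⟩)) (hasInt_smul (2 * s)
      (φ := fun x => w x * t x) ⟨i1, hμ⟩)) (hasInt_add (hasInt_sub ⟨j2, rfl⟩
      (hasInt_smul 2 ⟨j0, v0⟩)) ⟨i0, rfl⟩)
    have nn := E.2.symm.trans_ge (integral_nonneg fun x => ?_)
    · change 0 ≤ s ^ 2 * A + _ - _ + (_ - _ + Z) at nn
      nlinarith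
    -- the combination in `E` is a completed square: `s t` against the relative increment of `w`
    · have hw0 : 0 < w x := Real.exp_pos _
      have : ((s ^ 2 * (w x * t x ^ 2) + 2 * s * (t x * w (x + a))) -
        2 * s * (w x * t x)) + (w (x + a) ^ 2 / w x - 2 * w (x + a) + w x) =
          w x * (s * t x + (w (x + a) / w x - 1)) ^ 2 := by
        field_simp
        ring
      dsimp only [Pi.zero_apply]
      rw [this]
      positivity
  have := le_of_mul_le_exp key
  linarith

end core

/-! ### Second differences and integrability of the potential -/

/-- A lower bound `k` for the second derivative bounds the second difference and the first-order
Taylor remainder: `φ - k s² / 2` is convex. -/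
lemma taylor_bounds {φ φ' φ'' : ℝ → ℝ} (h1 : ∀ s, HasDerivAt φ (φ' s) s)
    (h2 : ∀ s, HasDerivAt φ' (φ'' s) s) {k : ℝ} (hk : ∀ s, k ≤ φ'' s) :
    2 * φ 0 + k ≤ φ 1 + φ (-1) ∧ φ 0 + φ' 0 + k / 2 ≤ φ 1 := by
  set ψ : ℝ → ℝ := fun s => φ s - k / 2 * s ^ 2 with hψ
  have d1 : ∀ s, HasDerivAt ψ (φ' s - k * s) s := fun s =>
    ((h1 s).sub ((hasDerivAt_pow 2 s).const_mul (k / 2))).congr_deriv (by push_cast; ring)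
  have d2 : ∀ s, HasDerivAt (fun s => φ' s - k * s) (φ'' s - k) s := fun s =>
    ((h2 s).sub ((hasDerivAt_id s).const_mul k)).congr_deriv (by ring)
  have e1 : deriv ψ = fun s => φ' s - k * s := funext fun s => (d1 s).deriv
  have hc : ConvexOn ℝ Set.univ ψ := by
    refine convexOn_univ_of_deriv2_nonneg (fun s => (d1 s).differentiableAt) ?_ fun s => ?_
    · rw [e1]; exact fun s => (d2 s).differentiableAt
    · change 0 ≤ deriv (deriv ψ) s
      rw [e1, (d2 s).deriv]
      linarith [hk s]
  constructor
  · have := hc.2 (Set.mem_univ 1) (Set.mem_univ (-1)) one_half_pos.le one_half_pos.le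
      (add_halves (1 : ℝ))
    norm_num [hψ] at this
    linarith
  · have := hc.le_slope_of_hasDerivAt (Set.mem_univ 0) (Set.mem_univ 1) one_pos (d1 0)
    rw [slope_def_field] at this
    norm_num [hψ] at this
    linarith

lemma dotProduct_hessianMatrix {N : ℕ} {f : (Fin N → ℝ) → ℝ} (hf : ContDiff ℝ 2 f)
    (x h : Fin N → ℝ) :
    h ⬝ᵥ hessianMatrix f x *ᵥ h = fderiv ℝ (fderiv ℝ f) x h h := by
  have hd : DifferentiableAt ℝ (fderiv ℝ f) x :=
    ((hf.fderiv_right (m := 1) (by norm_num)).differentiable (by norm_num)) x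
  have he : ∀ i j, hessianMatrix f x i j =
      fderiv ℝ (fderiv ℝ f) x (Pi.single i 1) (Pi.single j 1) := by
    intro i j
    rw [hessianMatrix, Matrix.of_apply, fderiv_clm_apply hd (differentiableAt_const _)]
    simp
  have hh : h = ∑ i, h i • (Pi.single i 1 : Fin N → ℝ) := pi_eq_sum_univ' h
  conv_rhs => rw [hh]
  simp only [dotProduct, mulVec, he, map_sum, map_smul, _root_.sum_apply,
    _root_.smul_apply, smul_eq_mul, Finset.mul_sum]
  rw [Finset.sum_comm]
  exact Finset.sum_congr rfl fun i _ => Finset.sum_congr rfl fun j _ => by ring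

/-- The Hessian bounds in integrated form: two-sided bounds for the symmetric second difference of
`f`, and its quadratic lower bound around a point. -/
lemma second_difference_bounds {N : ℕ} {f : (Fin N → ℝ) → ℝ} {c C : ℝ} (hf : ContDiff ℝ 2 f)
    (hhess : ∀ x : Fin N → ℝ,
      (hessianMatrix f x - c • (1 : Matrix (Fin N) (Fin N) ℝ)).PosSemidef ∧
      (C • (1 : Matrix (Fin N) (Fin N) ℝ) - hessianMatrix f x).PosSemidef)
    (x h : Fin N → ℝ) :
    2 * f x + ∑ i, c * h i ^ 2 ≤ f (x + h) + f (x - h) ∧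
    f (x + h) + f (x - h) ≤ 2 * f x + ∑ i, C * h i ^ 2 ∧
    f x + fderiv ℝ f x h + (∑ i, c * h i ^ 2) / 2 ≤ f (x + h) := by
  have hd1 : Differentiable ℝ f := hf.differentiable (by norm_num)
  have hd : Differentiable ℝ (fderiv ℝ f) :=
    (hf.fderiv_right (m := 1) (by norm_num)).differentiable (by norm_num)
  have hl : ∀ s : ℝ, HasDerivAt (fun s : ℝ => x + s • h) h s := fun s => by
    simpa using ((hasDerivAt_id s).smul_const h).const_add x
  have h1 : ∀ s : ℝ, HasDerivAt (fun s : ℝ => f (x + s • h)) (fderiv ℝ f (x + s • h) h) s :=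
    fun s => (hd1 _).hasFDerivAt.comp_hasDerivAt s (hl s)
  have h2 : ∀ s : ℝ, HasDerivAt (fun s : ℝ => fderiv ℝ f (x + s • h) h)
      (fderiv ℝ (fderiv ℝ f) (x + s • h) h h) s := fun s => by
    have := ((hd _).hasFDerivAt.comp_hasDerivAt s (hl s)).clm_apply (hasDerivAt_const s h)
    simpa using this
  have hs : ∀ k : ℝ, h ⬝ᵥ (k • (1 : Matrix (Fin N) (Fin N) ℝ)) *ᵥ h = ∑ i, k * h i ^ 2 := by
    intro k
    simp only [smul_mulVec, one_mulVec, dotProduct, Pi.smul_apply, smul_eq_mul]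
    exact Finset.sum_congr rfl fun i _ => by ring
  have lo : ∀ y, ∑ i, c * h i ^ 2 ≤ fderiv ℝ (fderiv ℝ f) y h h := by
    intro y
    have := (hhess y).1.dotProduct_mulVec_nonneg h
    rw [star_trivial, sub_mulVec, dotProduct_sub, hs, dotProduct_hessianMatrix hf] at this
    linarith
  have hi : ∀ y, fderiv ℝ (fderiv ℝ f) y h h ≤ ∑ i, C * h i ^ 2 := by
    intro y
    have := (hhess y).2.dotProduct_mulVec_nonneg h
    rw [star_trivial, sub_mulVec, dotProduct_sub, hs, dotProduct_hessianMatrix hf] at this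
    linarith
  have a := taylor_bounds h1 h2 (fun s => lo _)
  have b := taylor_bounds (fun s => (h1 s).neg) (fun s => (h2 s).neg)
    (fun s => neg_le_neg (hi (x + s • h)))
  simp only [Pi.neg_apply, zero_smul, add_zero, one_smul, neg_smul, ← sub_eq_add_neg] at a b
  exact ⟨a.1, by linarith [b.1], a.2⟩

/-- All exponential tilts of `exp (-f - ½‖x - r‖²_γ)` are integrable when `f` has an affine
minorant: they are dominated by a product of one-dimensional Gaussians. -/
lemma integrable_exp_potential {N : ℕ} {f : (Fin N → ℝ) → ℝ} (hf : Continuous f)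
    (g : Fin N → ℝ) (hfg : ∀ x, f 0 + ∑ i, g i * x i ≤ f x)
    {γ : Fin N → ℝ} (hγ : ∀ n, 0 < γ n) (r b : Fin N → ℝ) :
    Integrable fun x : Fin N → ℝ =>
      Real.exp (-(f x + 1 / 2 * ∑ n, γ n * (x n - r n) ^ 2) + ∑ i, b i * x i) := by
  set d : Fin N → ℝ := fun i => γ i * r i + b i - g i with hd
  have hi : Integrable fun x : Fin N → ℝ =>
      ∏ i, Real.exp (d i ^ 2 / γ i) * Real.exp (-(γ i / 4) * x i ^ 2) :=
    Integrable.fintype_prod (f := fun i t => Real.exp (d i ^ 2 / γ i) *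
      Real.exp (-(γ i / 4) * t ^ 2)) fun i =>
      (integrable_exp_neg_mul_sq (by linarith [hγ i])).const_mul _
  refine (hi.const_mul (Real.exp (-f 0))).mono' (by fun_prop) (.of_forall fun x => ?_)
  rw [Real.norm_of_nonneg (Real.exp_pos _).le]
  simp only [← Real.exp_add, ← Real.exp_sum]
  refine Real.exp_le_exp.2 ?_
  have : -(1 / 2 * ∑ n, γ n * (x n - r n) ^ 2) + ∑ i, b i * x i - ∑ i, g i * x i ≤
      ∑ i, (d i ^ 2 / γ i + -(γ i / 4) * x i ^ 2) := by
    rw [Finset.mul_sum, ← Finset.sum_neg_distrib, ← Finset.sum_add_distrib,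
      ← Finset.sum_sub_distrib]
    refine Finset.sum_le_sum fun i _ => ?_
    have h0 := hγ i
    have : d i ^ 2 / γ i + -(γ i / 4) * x i ^ 2 -
        (-(1 / 2 * (γ i * (x i - r i) ^ 2)) + b i * x i - g i * x i) =
        (d i - γ i / 2 * x i) ^ 2 / γ i + γ i / 2 * r i ^ 2 := by
      simp only [hd]; field_simp; ring
    have : 0 ≤ (d i - γ i / 2 * x i) ^ 2 / γ i + γ i / 2 * r i ^ 2 := by positivity
    linarith
  linarith [hfg x]

lemma smul_one_add_diagonal_inv {N : ℕ} {k : ℝ} {γ : Fin N → ℝ} (h : ∀ i, 0 < k + γ i) :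
    (k • (1 : Matrix (Fin N) (Fin N) ℝ) + diagonal γ)⁻¹ = diagonal fun i => (k + γ i)⁻¹ := by
  refine inv_eq_right_inv ?_
  rw [smul_one_eq_diagonal, diagonal_add, diagonal_mul_diagonal, ← diagonal_one]
  congr 1
  ext i
  exact mul_inv_cancel₀ (h i).ne'

/-! ### Covariance matrix -/

/-- **MMSE part of Lemma 2 (Brascamp–Lieb / Cramér–Rao type bound).**
Let `f : ℝ^N → ℝ` be `C²` with `c·I ⪯ ∇²f(x) ⪯ C·I` for all `x`, `0 < c ≤ C`,
let `γ > 0` componentwise, `Γ = Diag γ`, and fix `r ∈ ℝ^N`.  Then the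
covariance `Cov(r)` of the density `p(x|r) ∝ exp(−f(x) − ½‖x−r‖²_γ)`
satisfies `(C·I + Γ)⁻¹ ⪯ Cov(r) ⪯ (c·I + Γ)⁻¹` in the Loewner order. -/
theorem mmse_covariance_bounds
    (N : ℕ) (f : (Fin N → ℝ) → ℝ) (c C : ℝ)
    (hc : 0 < c) (hcC : c ≤ C)
    (hf : ContDiff ℝ 2 f)
    (hhess : ∀ x : Fin N → ℝ,
      (hessianMatrix f x - c • (1 : Matrix (Fin N) (Fin N) ℝ)).PosSemidef ∧
      (C • (1 : Matrix (Fin N) (Fin N) ℝ) - hessianMatrix f x).PosSemidef)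
    (γ : Fin N → ℝ) (hγ : ∀ n, 0 < γ n) (r : Fin N → ℝ) :
    (gecCov f γ r -
      ((C • (1 : Matrix (Fin N) (Fin N) ℝ) + Matrix.diagonal γ)⁻¹ :
        Matrix (Fin N) (Fin N) ℝ)).PosSemidef ∧
    (((c • (1 : Matrix (Fin N) (Fin N) ℝ) + Matrix.diagonal γ)⁻¹ :
        Matrix (Fin N) (Fin N) ℝ) - gecCov f γ r).PosSemidef := by
  have hfc : Continuous f := hf.continuous
  have lpos : ∀ i, 0 < c + γ i := fun i => add_pos hc (hγ i)
  have Mpos : ∀ i, 0 < C + γ i := fun i => add_pos (hc.trans_le hcC) (hγ i)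
  set V : (Fin N → ℝ) → ℝ := fun x => f x + 1 / 2 * ∑ n, γ n * (x n - r n) ^ 2 with hVd
  have hV : Continuous V := by fun_prop
  have hdens : ∀ x, gecDens f γ r x = Real.exp (-V x) := fun x => by
    rw [gecDens, hVd]; ring_nf
  have sd := second_difference_bounds hf hhess
  have hI : ∀ b : Fin N → ℝ, Integrable fun x => Real.exp (-V x + ∑ i, b i * x i) := by
    refine integrable_exp_potential hfc (fun i => fderiv ℝ f 0 (Pi.single i 1)) (fun x => ?_) hγ r
    have h := (sd 0 x).2.2
    have e : fderiv ℝ f 0 x = ∑ i, fderiv ℝ f 0 (Pi.single i 1) * x i := by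
      conv_lhs => rw [pi_eq_sum_univ' x]
      simp [mul_comm]
    have : 0 ≤ ∑ i, c * x i ^ 2 := Finset.sum_nonneg fun i _ => by positivity
    rw [zero_add, e] at h
    linarith
  have quad : ∀ x h : Fin N → ℝ, 1 / 2 * ∑ n, γ n * ((x + h) n - r n) ^ 2 +
      1 / 2 * ∑ n, γ n * ((x - h) n - r n) ^ 2 =
      2 * (1 / 2 * ∑ n, γ n * (x n - r n) ^ 2) + ∑ n, γ n * h n ^ 2 := by
    intro x h
    simp only [Finset.mul_sum, ← Finset.sum_add_distrib, Pi.add_apply, Pi.sub_apply]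
    exact Finset.sum_congr rfl fun i _ => by ring
  have split : ∀ (k : ℝ) (h : Fin N → ℝ),
      ∑ i, (k + γ i) * h i ^ 2 = ∑ i, k * h i ^ 2 + ∑ i, γ i * h i ^ 2 := by
    intro k h
    simp only [add_mul, Finset.sum_add_distrib]
  have hL : ∀ x h, 2 * V x + ∑ i, (c + γ i) * h i ^ 2 ≤ V (x + h) + V (x - h) := by
    intro x h
    simp only [hVd]
    linarith [(sd x h).1, quad x h, split c h]
  have hU : ∀ x h, V (x + h) + V (x - h) ≤ 2 * V x + ∑ i, (C + γ i) * h i ^ 2 := by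
    intro x h
    simp only [hVd]
    linarith [(sd x h).2.1, quad x h, split C h]
  have hZ : 0 < ∫ x, Real.exp (-V x) := integral_exp_pos (integrable_weight hI)
  have hZe : gecZ f γ r = ∫ x, Real.exp (-V x) := by simp only [gecZ, hdens]
  set Z := ∫ x, Real.exp (-V x) with hZd
  set m := gecMean f γ r with hm
  have isq : ∀ (i : Fin N) (a : ℝ), Integrable fun x : Fin N → ℝ =>
      Real.exp (-V x) * (x i - a) ^ 2 := by
    intro i a
    simpa [Pi.single_apply] using integrable_sq hV hI (Pi.single i 1) a
  have ilin : ∀ (i : Fin N), Integrable fun x : Fin N → ℝ => Real.exp (-V x) * x i := by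
    intro i
    simpa [Pi.single_apply] using integrable_lin hV hI (Pi.single i 1) 0
  have hmi : ∀ i, ∫ x, Real.exp (-V x) * x i = m i * Z := by
    intro i
    rw [hm, gecMean, hZe, div_mul_cancel₀ _ hZ.ne']
    simp only [hdens]
  have icov : ∀ i j, Integrable fun x : Fin N → ℝ =>
      Real.exp (-V x) * (x i - m i) * (x j - m j) := by
    intro i j
    refine ((isq i (m i)).add (isq j (m j))).mono' (by fun_prop) (.of_forall fun x => ?_)
    have h0 := Real.exp_pos (-V x)
    rw [Real.norm_eq_abs, mul_assoc, abs_mul, abs_of_pos h0, Pi.add_apply, ← mul_add]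
    gcongr
    rw [abs_le]
    constructor <;>
      nlinarith [sq_nonneg (x i - m i + (x j - m j)), sq_nonneg (x i - m i - (x j - m j)),
        sq_nonneg (x i - m i), sq_nonneg (x j - m j)]
  have hmean : ∀ u : Fin N → ℝ,
      ∫ x, Real.exp (-V x) * (∑ i, u i * x i - ∑ i, u i * m i) = 0 := by
    intro u
    have e : (fun x : Fin N → ℝ => Real.exp (-V x) * (∑ i, u i * x i - ∑ i, u i * m i)) =
        fun x => ∑ i, u i * (Real.exp (-V x) * x i) - (∑ i, u i * m i) * Real.exp (-V x) := by
      ext x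
      rw [mul_sub, Finset.mul_sum, mul_comm _ (Real.exp _)]
      congr 1
      exact Finset.sum_congr rfl fun i _ => by ring
    rw [e, integral_sub (integrable_finsetSum _ fun i _ => (ilin i).const_mul _)
      ((integrable_weight hI).const_mul _), integral_finsetSum _ fun i _ => (ilin i).const_mul _,
      integral_const_mul, Finset.sum_mul, ← Finset.sum_sub_distrib]
    refine Finset.sum_eq_zero fun i _ => ?_
    rw [integral_const_mul, hmi]
    ring
  have hquad : ∀ u : Fin N → ℝ, u ⬝ᵥ gecCov f γ r *ᵥ u =
      (∫ x, Real.exp (-V x) * (∑ i, u i * x i - ∑ i, u i * m i) ^ 2) / Z := by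
    intro u
    have e : (fun x : Fin N → ℝ => Real.exp (-V x) * (∑ i, u i * x i - ∑ i, u i * m i) ^ 2) =
        fun x => ∑ i, ∑ j, (u i * u j) * (Real.exp (-V x) * (x i - m i) * (x j - m j)) := by
      ext x
      have : ∑ i, u i * x i - ∑ i, u i * m i = ∑ i, u i * (x i - m i) := by
        simp only [mul_sub, Finset.sum_sub_distrib]
      rw [this, sq, Finset.sum_mul_sum, Finset.mul_sum]
      refine Finset.sum_congr rfl fun i _ => ?_
      rw [Finset.mul_sum]
      exact Finset.sum_congr rfl fun j _ => by ring
    rw [e, integral_finsetSum _ fun i _ => integrable_finsetSum _ fun j _ =>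
      (icov i j).const_mul _]
    simp only [dotProduct, mulVec, Finset.mul_sum, Finset.sum_div]
    refine Finset.sum_congr rfl fun i _ => ?_
    rw [integral_finsetSum _ fun j _ => (icov i j).const_mul _, Finset.sum_div]
    refine Finset.sum_congr rfl fun j _ => ?_
    rw [integral_const_mul, gecCov, Matrix.of_apply, hZe]
    simp only [hdens, ← hm]
    ring
  have hsymm : (gecCov f γ r).IsHermitian := by
    ext i j
    simp only [gecCov, conjTranspose_apply, Matrix.of_apply, star_trivial]
    congr 2
    ext x
    ring
  have hdiag : ∀ (d u : Fin N → ℝ), u ⬝ᵥ diagonal (fun i => (d i)⁻¹) *ᵥ u =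
      ∑ i, u i ^ 2 / d i := by
    intro d u
    simp only [dotProduct, mulVec_diagonal]
    exact Finset.sum_congr rfl fun i _ => by ring
  rw [smul_one_add_diagonal_inv Mpos, smul_one_add_diagonal_inv lpos]
  have hdh : ∀ d : Fin N → ℝ, (diagonal d).IsHermitian := fun d => by
    simp [IsHermitian]
  constructor
  · refine PosSemidef.of_dotProduct_mulVec_nonneg (hsymm.sub (hdh _)) fun u => ?_
    rw [star_trivial, sub_mulVec, dotProduct_sub, hquad, hdiag, sub_nonneg, le_div_iff₀ hZ,
      mul_comm]
    exact le_var hV hI Mpos hU u _ (hmean u)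
  · refine PosSemidef.of_dotProduct_mulVec_nonneg ((hdh _).sub hsymm) fun u => ?_
    rw [star_trivial, sub_mulVec, dotProduct_sub, hquad, hdiag, sub_nonneg, div_le_iff₀ hZ,
      mul_comm]
    exact var_le hV hI lpos hL u _ (hmean u) hZ
end

section
/- Let γ₁, γ₂ ∈ ℝ^N with γ₁, γ₂ > 0 componentwise, Γᵢ := Diag(γᵢ), Γ := Γ₁ + Γ₂, and let (i,j) be either (1,2) or (2,1). Let Q be a symmetric N×N matrix satisfying (c₂·I + Γᵢ)⁻¹ ⪯ Q ⪯ (c₁·I + Γᵢ)⁻¹ for constants 0 < c₁ ≤ c₂. Then the matrix J := Γ^{1/2} Q Γ^{1/2} − I satisfies the two-sided Loewner bounds Diag((γ_j − c₂·1) ⊘ (γᵢ + c₂·1)) ⪯ J ⪯ Diag((γ_j − c₁·1) ⊘ (γᵢ + c₁·1)), where the divisions are componentwise and 1 is the all-ones vector. -/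
/-!
Conjugation by the diagonal matrix `Γ^{1/2}` preserves the Loewner order, so the two bounds on `Q`
transfer to `Γ^{1/2} Q Γ^{1/2}`; after subtracting the identity, the conjugated bounds are exactly
the stated diagonal matrices (`scaled_resolvent_sub_one`).
-/

open Matrix

/-- The scaled resolvent of `Diag γi` is diagonal, so the congruence by `Γ^{1/2}` can be computed
entrywise: `(γi + γj) / (c + γi) - 1 = (γj - c) / (γi + c)`. -/
theorem scaled_resolvent_sub_one {N : ℕ} (γi γj : Fin N → ℝ) (hγi : ∀ n, 0 < γi n)
    (hγj : ∀ n, 0 < γj n) (c : ℝ) (hc : 0 < c) :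
    Matrix.diagonal (fun n => Real.sqrt (γi n + γj n)) *
        (c • (1 : Matrix (Fin N) (Fin N) ℝ) + Matrix.diagonal γi)⁻¹ *
        Matrix.diagonal (fun n => Real.sqrt (γi n + γj n)) - 1 =
      Matrix.diagonal (fun n => (γj n - c) / (γi n + c)) := by
  have hne : ∀ n, γi n + c ≠ 0 := fun n => (add_pos (hγi n) hc).ne'
  have hinv : (c • (1 : Matrix (Fin N) (Fin N) ℝ) + Matrix.diagonal γi)⁻¹ =
      Matrix.diagonal (fun n => (γi n + c)⁻¹) := by
    apply Matrix.inv_eq_right_inv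
    rw [Matrix.smul_one_eq_diagonal, Matrix.diagonal_add, Matrix.diagonal_mul_diagonal,
      ← Matrix.diagonal_one]
    congr 1
    funext n
    rw [add_comm, mul_inv_cancel₀ (hne n)]
  rw [hinv, Matrix.diagonal_mul_diagonal, Matrix.diagonal_mul_diagonal, ← Matrix.diagonal_one,
    Matrix.diagonal_sub]
  congr 1
  funext n
  have hsq := Real.mul_self_sqrt (add_pos (hγi n) (hγj n)).le
  rw [mul_right_comm, hsq]
  field_simp [hne n]
  ring

/-- **Diagonal Loewner bounds on the scaled GEC Jacobian (intermediate step
in the contraction argument of Theorem 4).**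
Let `γᵢ, γⱼ > 0` componentwise (the pair `(i,j)` being `(1,2)` or `(2,1)`),
`Γᵢ = Diag γᵢ`, `Γ = Diag γᵢ + Diag γⱼ`, and let `Q` be a symmetric matrix
with `(c₂·I + Γᵢ)⁻¹ ⪯ Q ⪯ (c₁·I + Γᵢ)⁻¹` for constants `0 < c₁ ≤ c₂`.
Then `J := Γ^{1/2} Q Γ^{1/2} − I` satisfies
`Diag((γⱼ − c₂·1) ⊘ (γᵢ + c₂·1)) ⪯ J ⪯ Diag((γⱼ − c₁·1) ⊘ (γᵢ + c₁·1))`. -/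
theorem gec_jacobian_diagonal_bounds
    (N : ℕ)
    (γi γj : Fin N → ℝ) (hγi : ∀ n, 0 < γi n) (hγj : ∀ n, 0 < γj n)
    (c₁ c₂ : ℝ) (hc₁ : 0 < c₁) (hc : c₁ ≤ c₂)
    (Q : Matrix (Fin N) (Fin N) ℝ) (hQsym : Q.IsSymm)
    (hQlo : (Q - ((c₂ • (1 : Matrix (Fin N) (Fin N) ℝ) + Matrix.diagonal γi)⁻¹ :
        Matrix (Fin N) (Fin N) ℝ)).PosSemidef)
    (hQhi : (((c₁ • (1 : Matrix (Fin N) (Fin N) ℝ) + Matrix.diagonal γi)⁻¹ :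
        Matrix (Fin N) (Fin N) ℝ) - Q).PosSemidef) :
    ((Matrix.diagonal (fun n => Real.sqrt (γi n + γj n)) * Q *
        Matrix.diagonal (fun n => Real.sqrt (γi n + γj n)) - 1) -
      Matrix.diagonal (fun n => (γj n - c₂) / (γi n + c₂))).PosSemidef ∧
    (Matrix.diagonal (fun n => (γj n - c₁) / (γi n + c₁)) -
      (Matrix.diagonal (fun n => Real.sqrt (γi n + γj n)) * Q *
        Matrix.diagonal (fun n => Real.sqrt (γi n + γj n)) - 1)).PosSemidef := by
  have hconj : ∀ A : Matrix (Fin N) (Fin N) ℝ, A.PosSemidef →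
      (Matrix.diagonal (fun n => Real.sqrt (γi n + γj n)) * A *
        Matrix.diagonal (fun n => Real.sqrt (γi n + γj n))).PosSemidef := by
    intro A hA
    simpa [Matrix.diagonal_conjTranspose] using
      hA.mul_mul_conjTranspose_same (Matrix.diagonal (fun n => Real.sqrt (γi n + γj n)))
  constructor
  · rw [← scaled_resolvent_sub_one γi γj hγi hγj c₂ (hc₁.trans_le hc), sub_sub_sub_cancel_right,
      ← Matrix.sub_mul, ← Matrix.mul_sub]
    exact hconj _ hQlo
  · rw [← scaled_resolvent_sub_one γi γj hγi hγj c₁ hc₁, sub_sub_sub_cancel_right,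
      ← Matrix.sub_mul, ← Matrix.mul_sub]
    exact hconj _ hQhi
end

section
/- Let f₁, f₂ : ℝ^N → ℝ be differentiable and let x̂ ∈ ℝ^N satisfy ∇f₁(x̂) + ∇f₂(x̂) = 0. Fix an index pair (i,j) ∈ {(1,2),(2,1)}. Suppose γᵢ, ηᵢ, rᵢ ∈ ℝ^N with γᵢ > 0 componentwise satisfy ∇fᵢ(x̂) + γᵢ ⊙ (x̂ − rᵢ) = 0, and suppose γ_j := ηᵢ − γᵢ has all components nonzero. Define r_j := (ηᵢ ⊙ x̂ − γᵢ ⊙ rᵢ) ⊘ γ_j. Then ∇f_j(x̂) + γ_j ⊙ (x̂ − r_j) = 0; that is, x̂ also satisfies the first-order stationarity condition of the proximal problem for f_j with parameters (r_j, γ_j). -/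
/-- **Induction step of Theorem 5(a).**
Let `fᵢ, fⱼ : ℝ^N → ℝ` be differentiable (the pair `(i,j)` being `(1,2)` or
`(2,1)`) and let `x̂` satisfy `∇fᵢ(x̂) + ∇fⱼ(x̂) = 0`.  Suppose `γᵢ > 0`
componentwise, `∇fᵢ(x̂) + γᵢ ⊙ (x̂ − rᵢ) = 0`, `γⱼ := ηᵢ − γᵢ` has all
components nonzero, and `rⱼ := (ηᵢ ⊙ x̂ − γᵢ ⊙ rᵢ) ⊘ γⱼ`.  Then
`∇fⱼ(x̂) + γⱼ ⊙ (x̂ − rⱼ) = 0`; that is, `x̂` also satisfies the first-order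
stationarity condition of the proximal problem for `fⱼ` with parameters
`(rⱼ, γⱼ)`. -/
theorem gec_map_stationarity_propagates
    (N : ℕ)
    (fi fj : EuclideanSpace ℝ (Fin N) → ℝ)
    (hfi : Differentiable ℝ fi) (hfj : Differentiable ℝ fj)
    (xhat : EuclideanSpace ℝ (Fin N))
    (hstat : ∀ n, gradient fi xhat n + gradient fj xhat n = 0)
    (γi ηi ri : Fin N → ℝ) (hγi : ∀ n, 0 < γi n)
    (hfix : ∀ n, gradient fi xhat n + γi n * (xhat n - ri n) = 0)
    (γj : Fin N → ℝ) (hγj : ∀ n, γj n = ηi n - γi n)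
    (hγjne : ∀ n, γj n ≠ 0)
    (rj : Fin N → ℝ)
    (hrj : ∀ n, rj n = (ηi n * xhat n - γi n * ri n) / γj n) :
    ∀ n, gradient fj xhat n + γj n * (xhat n - rj n) = 0 := by
  intro n
  have key : γj n * rj n = ηi n * xhat n - γi n * ri n := by
    rw [hrj, mul_div_cancel₀ _ (hγjne n)]
  -- The quadratic forces are opposite: `γⱼ (x̂ - rⱼ) = -γᵢ (x̂ - rᵢ)`,
  -- so the claim is `hstat - hfix`.
  linear_combination hstat n - hfix n - key + xhat n * hγj n
end

section
/- Let P₁, P₂ be symmetric N×N matrices with c₁·I ⪯ Pᵢ ⪯ c₂·I for constants 0 < c₁ ≤ c₂. For γ ∈ ℝ^N with γ > 0 componentwise, define Gⁱ(γ) := 1 ⊘ diag((Pᵢ + Diag(γ))⁻¹) − γ for i = 1, 2 (a map from positive vectors to nonnegative vectors). Then the iteration γ^{k+1} := G²(G¹(γ^k)), started from any γ⁰ > 0, is well defined and converges to a fixed point of G² ∘ G¹ that is unique (and in particular independent of the initialization γ⁰). -/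
/-!
Write `A = P + Diag γ` with `P` positive definite. Completing the square gives
`1 / (A⁻¹)ᵢᵢ = min {xᵀ A x | xᵢ = 1}`, hence
`G(γ)ᵢ = min {xᵀ P x + ∑_{j ≠ i} γⱼ xⱼ² | xᵢ = 1}`.
As `xᵀ P x ≥ c₁ |x|² ≥ c₁` on this set, `G` takes values in `[c₁, c₂]` (`le_gecG`, `gecG_le`).
Moreover `γ ≤ (1 + a) γ'` gives `G(γ) ≤ (1 + a) G(γ') - a c₁ ≤ (1 + q a) G(γ')` with
`q = 1 - c₁ / c₂ < 1` (`gecG_contract`): `G` is monotone (`a = 0`) and contracts ratios of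
positive vectors. The bounds and the contraction pass to `G² ∘ G¹`, with factor `q²`.

The iterates of such a map converge globally (`exists_tendsto_of_contract`). Starting
from the constant vector `c₁` the iterates increase to a limit `s`; since ratios contract
geometrically, `s` is a fixed point, and every other orbit is squeezed against `s`.
Uniqueness follows by applying convergence to the constant orbit of another positive fixed point.
-/

open Matrix Filter

/-- The GEC second-order update map
`G(γ) = 1 ⊘ diag((P + Diag γ)⁻¹) − γ`. -/
noncomputable def gecG {N : ℕ} (P : Matrix (Fin N) (Fin N) ℝ) (γ : Fin N → ℝ) :
    Fin N → ℝ :=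
  fun i => (((P + Matrix.diagonal γ)⁻¹ : Matrix (Fin N) (Fin N) ℝ) i i)⁻¹ - γ i

/-- The iterates `γ^{k+1} = G²(G¹(γ^k))` of the GEC second-order update. -/
noncomputable def gecGIter {N : ℕ} (P₁ P₂ : Matrix (Fin N) (Fin N) ℝ)
    (γ₀ : Fin N → ℝ) : ℕ → (Fin N → ℝ)
  | 0 => γ₀
  | k + 1 => gecG P₂ (gecG P₁ (gecGIter P₁ P₂ γ₀ k))

open Topology in
/-- Global convergence of a map of the positive orthant which has values in the box `[c₁, c₂]^ι`
and contracts by a factor `r < 1` the excess ratio of positive vectors, the `a` in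
`x ≤ (1 + a) y`. The case `a = 0` of `hT` says that `T` is monotone. -/
lemma exists_tendsto_of_contract {ι : Type*} (T : (ι → ℝ) → ι → ℝ) (c₁ c₂ r : ℝ)
    (hc₁ : 0 < c₁) (hc : c₁ ≤ c₂) (hr0 : 0 ≤ r) (hr1 : r < 1)
    (hb : ∀ x : ι → ℝ, (∀ i, 0 < x i) → ∀ i, c₁ ≤ T x i ∧ T x i ≤ c₂)
    (hT : ∀ x y : ι → ℝ, (∀ i, 0 < x i) → (∀ i, 0 < y i) → ∀ a : ℝ, 0 ≤ a →
      (∀ i, x i ≤ (1 + a) * y i) → ∀ i, T x i ≤ (1 + r * a) * T y i) :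
    ∃ s : ι → ℝ, T s = s ∧
      ∀ x : ι → ℝ, (∀ i, 0 < x i) → Tendsto (fun k => T^[k] x) atTop (𝓝 s) := by
  have hpos : ∀ x : ι → ℝ, (∀ i, 0 < x i) → ∀ k i, 0 < T^[k] x i := by
    intro x hx k
    induction k with
    | zero => simpa using hx
    | succ k ih =>
      intro i
      rw [Function.iterate_succ_apply']
      exact hc₁.trans_le (hb _ ih i).1
  have hgeo : ∀ x y : ι → ℝ, (∀ i, 0 < x i) → (∀ i, 0 < y i) → ∀ a : ℝ, 0 ≤ a →
      (∀ i, x i ≤ (1 + a) * y i) → ∀ k i, T^[k] x i ≤ (1 + r ^ k * a) * T^[k] y i := by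
    intro x y hx hy a ha h k
    induction k with
    | zero => simpa using h
    | succ k ih =>
      intro i
      rw [Function.iterate_succ_apply', Function.iterate_succ_apply', pow_succ', mul_assoc]
      exact hT _ _ (hpos x hx k) (hpos y hy k) _ (by positivity) ih i
  have hc₂ : 0 < c₂ := hc₁.trans_le hc
  set a := c₂ / c₁ with ha
  have ha0 : 0 < a := by positivity
  have hac : a * c₁ = c₂ := by rw [ha]; field_simp
  -- any vector of the box is within the ratio `1 + a` of any vector bounded below by `c₁`
  have hratio : ∀ u v : ℝ, u ≤ c₂ → c₁ ≤ v → u ≤ (1 + a) * v := by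
    intro u v hu hv
    nlinarith [mul_le_mul_of_nonneg_left hv ha0.le]
  have hlim : Tendsto (fun k : ℕ => 1 + r ^ k * a) atTop (𝓝 1) := by
    simpa using ((tendsto_pow_atTop_nhds_zero_of_lt_one hr0 hr1).mul_const a).const_add 1
  set l : ι → ℝ := fun _ => c₁ with hl
  have hlpos : ∀ i, 0 < l i := fun _ => hc₁
  have hlbox : ∀ k i, c₁ ≤ T^[k] l i ∧ T^[k] l i ≤ c₂ := by
    intro k i
    cases k with
    | zero => exact ⟨le_rfl, hc⟩
    | succ k =>
      rw [Function.iterate_succ_apply']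
      exact hb _ (hpos l hlpos k) i
  have hmono : ∀ i, Monotone fun k => T^[k] l i := by
    intro i
    refine monotone_nat_of_le_succ fun k => ?_
    have := hgeo l (T l) hlpos (hpos l hlpos 1) 0 le_rfl
      (fun i => by rw [add_zero, one_mul]; exact (hlbox 1 i).1) k i
    rwa [mul_zero, add_zero, one_mul, ← Function.iterate_succ_apply] at this
  have hbdd : ∀ i, BddAbove (Set.range fun k => T^[k] l i) := fun i =>
    ⟨c₂, by rintro _ ⟨k, rfl⟩; exact (hlbox k i).2⟩
  set s : ι → ℝ := fun i => ⨆ k, T^[k] l i with hs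
  have hls : ∀ i, Tendsto (fun k => T^[k] l i) atTop (𝓝 (s i)) := fun i =>
    tendsto_atTop_ciSup (hmono i) (hbdd i)
  have hle : ∀ k i, T^[k] l i ≤ s i := fun k i => le_ciSup (hbdd i) k
  have hsbox : ∀ i, c₁ ≤ s i ∧ s i ≤ c₂ := fun i =>
    ⟨hle 0 i, ciSup_le fun k => (hlbox k i).2⟩
  have hspos : ∀ i, 0 < s i := fun i => hc₁.trans_le (hsbox i).1
  have hsl : ∀ k i, s i ≤ (1 + r ^ k * a) * T^[k] l i := by
    intro k i
    refine ciSup_le fun m => ?_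
    refine (hmono i (Nat.le_add_left m k)).trans ?_
    dsimp only
    rw [Function.iterate_add_apply]
    exact hgeo _ l (hpos l hlpos m) hlpos a ha0.le
      (fun j => hratio _ _ (hlbox m j).2 le_rfl) k i
  have hfix : T s = s := by
    ext i
    apply le_antisymm
    · have h1 : ∀ k, T s i ≤ (1 + r ^ (k + 1) * a) * T^[k + 1] l i := by
        intro k
        have := hT s _ hspos (hpos l hlpos k) _ (by positivity) (hsl k) i
        rwa [← mul_assoc, ← pow_succ', ← Function.iterate_succ_apply' T] at this
      have h2 := (hlim.mul (hls i)).comp (tendsto_add_atTop_nat 1)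
      rw [one_mul] at h2
      exact ge_of_tendsto' h2 h1
    · refine le_of_tendsto' ((hls i).comp (tendsto_add_atTop_nat 1)) fun k => ?_
      have := hT _ s (hpos l hlpos k) hspos 0 le_rfl (fun j => by simpa using hle k j) i
      simpa [Function.iterate_succ_apply'] using this
  have hfixk : ∀ k, T^[k] s = s := fun k => Function.iterate_fixed hfix k
  refine ⟨s, hfix, fun x hx => ?_⟩
  -- the first step moves the orbit into the box
  refine (tendsto_add_atTop_iff_nat 1).1 (tendsto_pi_nhds.2 fun i => ?_)
  have hxb := hb x hx
  have hxp := hpos x hx 1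
  have hup : ∀ k, T^[k + 1] x i ≤ (1 + r ^ k * a) * s i := by
    intro k
    have := hgeo (T x) s hxp hspos a ha0.le (fun j => hratio _ _ (hxb j).2 (hsbox j).1) k i
    rwa [hfixk, ← Function.iterate_succ_apply] at this
  have hlow : ∀ k, s i / (1 + r ^ k * a) ≤ T^[k + 1] x i := by
    intro k
    have := hgeo s (T x) hspos hxp a ha0.le (fun j => hratio _ _ (hsbox j).2 (hxb j).1) k i
    rw [hfixk, ← Function.iterate_succ_apply] at this
    rw [div_le_iff₀ (by positivity)]
    linarith
  refine tendsto_of_tendsto_of_tendsto_of_le_of_le ?_ ?_ hlow hup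
  · have h := (tendsto_const_nhds (x := s i)).div hlim one_ne_zero
    rwa [div_one] at h
  · simpa using hlim.mul_const (s i)

/-- For positive definite `A`, the minimum of `xᵀ A x` subject to `xᵢ = 1` is `1 / (A⁻¹)ᵢᵢ`,
attained at the `i`-th column of `A⁻¹`, rescaled. -/
lemma isLeast_inv_diag {n : Type*} [Fintype n] [DecidableEq n] {A : Matrix n n ℝ}
    (hA : A.PosDef) (i : n) :
    IsLeast {q | ∃ x : n → ℝ, x i = 1 ∧ x ⬝ᵥ (A *ᵥ x) = q} ((A⁻¹ i i)⁻¹) := by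
  have hd : 0 < A⁻¹ i i := hA.inv.diag_pos
  set d := A⁻¹ i i with hd_def
  set u : n → ℝ := A⁻¹ *ᵥ Pi.single i 1 with hu
  have hui : u i = d := by simp [hu, hd_def]
  have hAu : A *ᵥ u = Pi.single i 1 := by
    rw [hu, mulVec_mulVec, mul_nonsing_inv _ ((isUnit_iff_isUnit_det A).1 hA.isUnit),
      one_mulVec]
  have hsymm : Aᵀ = A := by simpa using hA.isHermitian.eq
  constructor
  · refine ⟨d⁻¹ • u, by simp [hui, hd.ne'], ?_⟩
    rw [mulVec_smul, hAu]
    simp [hui, hd.ne']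
  · rintro _ ⟨x, hx, rfl⟩
    -- nonnegativity of the form at `x - u / d` is the inequality, by completing the square
    have h := hA.posSemidef.dotProduct_mulVec_nonneg (x - d⁻¹ • u)
    have hux : u ⬝ᵥ (A *ᵥ x) = 1 := by
      rw [dotProduct_mulVec, ← hsymm, vecMul_transpose, hAu]
      simp [hx]
    simp only [star_trivial, mulVec_sub, mulVec_smul, hAu, sub_dotProduct, dotProduct_sub,
      smul_dotProduct, dotProduct_smul, hux, dotProduct_single_one, Pi.sub_apply,
      Pi.smul_apply, hui, hx, smul_eq_mul] at h
    have : d⁻¹ * d = 1 := inv_mul_cancel₀ hd.ne'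
    rw [this] at h
    linarith

section Update

variable {N : ℕ} {P : Matrix (Fin N) (Fin N) ℝ} {c₁ c₂ : ℝ}

lemma le_quadForm (hlo : (P - c₁ • (1 : Matrix (Fin N) (Fin N) ℝ)).PosSemidef) (x : Fin N → ℝ) :
    c₁ * (x ⬝ᵥ x) ≤ x ⬝ᵥ (P *ᵥ x) := by
  have h := hlo.dotProduct_mulVec_nonneg x
  simp only [star_trivial, sub_mulVec, smul_mulVec, one_mulVec, dotProduct_sub, dotProduct_smul,
    smul_eq_mul] at h
  linarith

lemma posDef_add_diagonal (hc₁ : 0 < c₁)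
    (hlo : (P - c₁ • (1 : Matrix (Fin N) (Fin N) ℝ)).PosSemidef)
    {γ : Fin N → ℝ} (hγ : ∀ n, 0 < γ n) : (P + diagonal γ).PosDef := by
  have hP : P.PosSemidef := by
    have := hlo.add (PosSemidef.one.smul hc₁.le)
    rwa [sub_add_cancel] at this
  exact PosDef.posSemidef_add hP (PosDef.diagonal hγ)

lemma quadForm_add_diagonal (γ x : Fin N → ℝ) (i : Fin N) (hx : x i = 1) :
    x ⬝ᵥ ((P + diagonal γ) *ᵥ x) =
      x ⬝ᵥ (P *ᵥ x) + ∑ j ∈ Finset.univ.erase i, γ j * x j ^ 2 + γ i := by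
  have h : x ⬝ᵥ (diagonal γ *ᵥ x) = ∑ j, γ j * x j ^ 2 := by
    simp only [dotProduct, mulVec_diagonal]
    exact Finset.sum_congr rfl fun j _ => by ring
  rw [add_mulVec, dotProduct_add, h, ← Finset.sum_erase_add _ _ (Finset.mem_univ i), hx]
  ring

/-- Variational form of the update: `G(γ)ᵢ` is the minimum of
`xᵀ P x + ∑_{j ≠ i} γⱼ xⱼ²` subject to `xᵢ = 1`. -/
lemma isLeast_gecG (hc₁ : 0 < c₁)
    (hlo : (P - c₁ • (1 : Matrix (Fin N) (Fin N) ℝ)).PosSemidef)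
    {γ : Fin N → ℝ} (hγ : ∀ n, 0 < γ n) (i : Fin N) :
    IsLeast {q | ∃ x : Fin N → ℝ, x i = 1 ∧
      x ⬝ᵥ (P *ᵥ x) + ∑ j ∈ Finset.univ.erase i, γ j * x j ^ 2 = q} (gecG P γ i) := by
  obtain ⟨⟨x, hx, hxq⟩, hmin⟩ := isLeast_inv_diag (posDef_add_diagonal hc₁ hlo hγ) i
  constructor
  · refine ⟨x, hx, ?_⟩
    rw [quadForm_add_diagonal γ x i hx] at hxq
    rw [gecG, ← hxq]
    ring
  · rintro _ ⟨y, hy, rfl⟩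
    have := hmin ⟨y, hy, rfl⟩
    rw [quadForm_add_diagonal γ y i hy] at this
    rw [gecG]
    linarith

lemma le_quadForm_of_apply_eq_one (hc₁ : 0 < c₁)
    (hlo : (P - c₁ • (1 : Matrix (Fin N) (Fin N) ℝ)).PosSemidef)
    (x : Fin N → ℝ) (i : Fin N) (hx : x i = 1) : c₁ ≤ x ⬝ᵥ (P *ᵥ x) := by
  refine le_trans ?_ (le_quadForm hlo x)
  have h1 : x i * x i ≤ x ⬝ᵥ x :=
    Finset.single_le_sum (f := fun j => x j * x j) (fun j _ => mul_self_nonneg _)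
      (Finset.mem_univ i)
  rw [hx] at h1
  nlinarith

lemma le_gecG (hc₁ : 0 < c₁) (hlo : (P - c₁ • (1 : Matrix (Fin N) (Fin N) ℝ)).PosSemidef)
    {γ : Fin N → ℝ} (hγ : ∀ n, 0 < γ n) (i : Fin N) : c₁ ≤ gecG P γ i := by
  obtain ⟨x, hx, hxq⟩ := (isLeast_gecG hc₁ hlo hγ i).1
  rw [← hxq]
  have h : 0 ≤ ∑ j ∈ Finset.univ.erase i, γ j * x j ^ 2 :=
    Finset.sum_nonneg fun j _ => mul_nonneg (hγ j).le (sq_nonneg _)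
  linarith [le_quadForm_of_apply_eq_one hc₁ hlo x i hx]

/-- The test vector `eᵢ` in the variational form bounds `G(γ)ᵢ` by `Pᵢᵢ`. -/
lemma gecG_le (hc₁ : 0 < c₁) (hlo : (P - c₁ • (1 : Matrix (Fin N) (Fin N) ℝ)).PosSemidef)
    (hhi : (c₂ • (1 : Matrix (Fin N) (Fin N) ℝ) - P).PosSemidef)
    {γ : Fin N → ℝ} (hγ : ∀ n, 0 < γ n) (i : Fin N) : gecG P γ i ≤ c₂ := by
  have h := (isLeast_gecG hc₁ hlo hγ i).2 ⟨Pi.single i 1, by simp, rfl⟩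
  have hsum : ∑ j ∈ Finset.univ.erase i, γ j * (Pi.single i 1 : Fin N → ℝ) j ^ 2 = 0 :=
    Finset.sum_eq_zero fun j hj => by simp [Pi.single_eq_of_ne (Finset.ne_of_mem_erase hj)]
  have hd := hhi.diag_nonneg (i := i)
  simp only [Matrix.sub_apply, Matrix.smul_apply, one_apply_eq, smul_eq_mul, mul_one] at hd
  rw [hsum, add_zero] at h
  simp at h
  linarith

/-- The update contracts excess ratios: replacing `γ'` by `(1 + a) γ'` scales only the diagonal
part of the minimized form, so at least `a c₁ ≥ a (c₁ / c₂) G(γ')ᵢ` is saved. -/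
lemma gecG_contract (hc₁ : 0 < c₁) (hc : c₁ ≤ c₂)
    (hlo : (P - c₁ • (1 : Matrix (Fin N) (Fin N) ℝ)).PosSemidef)
    (hhi : (c₂ • (1 : Matrix (Fin N) (Fin N) ℝ) - P).PosSemidef)
    {γ γ' : Fin N → ℝ} (hγ : ∀ n, 0 < γ n) (hγ' : ∀ n, 0 < γ' n) {a : ℝ} (ha : 0 ≤ a)
    (h : ∀ n, γ n ≤ (1 + a) * γ' n) (i : Fin N) :
    gecG P γ i ≤ (1 + (1 - c₁ / c₂) * a) * gecG P γ' i := by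
  have hc₂ : 0 < c₂ := hc₁.trans_le hc
  obtain ⟨x, hx, hxq⟩ := (isLeast_gecG hc₁ hlo hγ' i).1
  have h1 := (isLeast_gecG hc₁ hlo hγ i).2 ⟨x, hx, rfl⟩
  have h2 : ∑ j ∈ Finset.univ.erase i, γ j * x j ^ 2 ≤
      (1 + a) * ∑ j ∈ Finset.univ.erase i, γ' j * x j ^ 2 := by
    rw [Finset.mul_sum]
    refine Finset.sum_le_sum fun j _ => ?_
    rw [← mul_assoc]
    exact mul_le_mul_of_nonneg_right (h j) (sq_nonneg _)
  have h3 := mul_le_mul_of_nonneg_left (le_quadForm_of_apply_eq_one hc₁ hlo x i hx) ha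
  have h4 : c₁ / c₂ * gecG P γ' i ≤ c₁ := by
    calc c₁ / c₂ * gecG P γ' i ≤ c₁ / c₂ * c₂ :=
          mul_le_mul_of_nonneg_left (gecG_le hc₁ hlo hhi hγ' i) (by positivity)
      _ = c₁ := by field_simp
  have h5 := mul_le_mul_of_nonneg_left h4 ha
  rw [← hxq] at h5 ⊢
  linarith

end Update

lemma gecGIter_eq_iterate {N : ℕ} (P₁ P₂ : Matrix (Fin N) (Fin N) ℝ) (γ₀ : Fin N → ℝ) (k : ℕ) :
    gecGIter P₁ P₂ γ₀ k = (fun γ => gecG P₂ (gecG P₁ γ))^[k] γ₀ := by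
  induction k with
  | zero => rfl
  | succ k ih => rw [Function.iterate_succ_apply', ← ih, gecGIter]

/-- **Convergence of the GEC second-order terms for MAP estimation
(Theorem 5(b), vector-valued diagonalization).**
Let `P₁, P₂` be symmetric with `c₁·I ⪯ Pᵢ ⪯ c₂·I`, `0 < c₁ ≤ c₂`, and let
`Gⁱ(γ) := 1 ⊘ diag((Pᵢ + Diag γ)⁻¹) − γ`.  Then the iteration
`γ^{k+1} = G²(G¹(γ^k))` started from any `γ⁰ > 0` is well defined (all
iterates remain positive) and converges to a fixed point of `G² ∘ G¹` that is
unique among positive vectors, in particular independent of `γ⁰`. -/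
theorem gec_second_order_convergence
    (N : ℕ)
    (P₁ P₂ : Matrix (Fin N) (Fin N) ℝ)
    (hP₁sym : P₁.IsSymm) (hP₂sym : P₂.IsSymm)
    (c₁ c₂ : ℝ) (hc₁ : 0 < c₁) (hc : c₁ ≤ c₂)
    (hP₁lo : (P₁ - c₁ • (1 : Matrix (Fin N) (Fin N) ℝ)).PosSemidef)
    (hP₁hi : (c₂ • (1 : Matrix (Fin N) (Fin N) ℝ) - P₁).PosSemidef)
    (hP₂lo : (P₂ - c₁ • (1 : Matrix (Fin N) (Fin N) ℝ)).PosSemidef)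
    (hP₂hi : (c₂ • (1 : Matrix (Fin N) (Fin N) ℝ) - P₂).PosSemidef) :
    ∃ γs : Fin N → ℝ,
      gecG P₂ (gecG P₁ γs) = γs ∧
      (∀ γ' : Fin N → ℝ, (∀ n, 0 < γ' n) → gecG P₂ (gecG P₁ γ') = γ' → γ' = γs) ∧
      ∀ γ₀ : Fin N → ℝ, (∀ n, 0 < γ₀ n) →
        (∀ k n, 0 < gecGIter P₁ P₂ γ₀ k n) ∧
        Tendsto (fun k => gecGIter P₁ P₂ γ₀ k) atTop (nhds γs) := by
  have hc₂ : 0 < c₂ := hc₁.trans_le hc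
  have hpos₁ : ∀ γ : Fin N → ℝ, (∀ n, 0 < γ n) → ∀ n, 0 < gecG P₁ γ n :=
    fun γ hγ n => hc₁.trans_le (le_gecG hc₁ hP₁lo hγ n)
  have hpos₂ : ∀ γ : Fin N → ℝ, (∀ n, 0 < γ n) → ∀ n, 0 < gecG P₂ γ n :=
    fun γ hγ n => hc₁.trans_le (le_gecG hc₁ hP₂lo hγ n)
  have hq0 : 0 ≤ 1 - c₁ / c₂ := sub_nonneg.2 ((div_le_one hc₂).2 hc)
  have hq1 : 1 - c₁ / c₂ < 1 := sub_lt_self _ (by positivity)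
  obtain ⟨s, hfix, hlim⟩ := exists_tendsto_of_contract (fun γ => gecG P₂ (gecG P₁ γ)) c₁ c₂
    ((1 - c₁ / c₂) * (1 - c₁ / c₂)) hc₁ hc (by positivity)
    (mul_lt_one_of_nonneg_of_lt_one_left hq0 hq1 hq1.le)
    (fun x hx i => ⟨le_gecG hc₁ hP₂lo (hpos₁ x hx) i, gecG_le hc₁ hP₂lo hP₂hi (hpos₁ x hx) i⟩)
    (fun x y hx hy a ha h i => by
      rw [mul_assoc]
      exact gecG_contract hc₁ hc hP₂lo hP₂hi (hpos₁ x hx) (hpos₁ y hy) (by positivity)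
        (gecG_contract hc₁ hc hP₁lo hP₁hi hx hy ha h) i)
  refine ⟨s, hfix, fun γ' hγ' hfix' => ?_, fun γ₀ hγ₀ => ⟨fun k => ?_, ?_⟩⟩
  · have h := hlim γ' hγ'
    simp_rw [Function.iterate_fixed (f := fun γ => gecG P₂ (gecG P₁ γ)) hfix'] at h
    exact tendsto_nhds_unique tendsto_const_nhds h
  · induction k with
    | zero => exact hγ₀
    | succ k ih => exact hpos₂ _ (hpos₁ _ ih)
  · simp_rw [gecGIter_eq_iterate]
    exact hlim γ₀ hγ₀
end

section
/- Let P be a symmetric positive semidefinite N×N matrix, γ ∈ ℝ^N with γ > 0 componentwise, and define G(γ) ∈ ℝ^N by G(γ)ᵢ := 1/[(P + Diag(γ))⁻¹]ᵢᵢ − γᵢ. Then for every scalar α > 1, G(αγ) ≤ α G(γ) componentwise. -/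
/-!
With `A = P + Diag γ` and `B = P + Diag (αγ)`, the terms `γ i` cancel and the claim becomes
`(A⁻¹) i i ≤ α * (B⁻¹) i i`. It follows from `B ≤ α A` (the difference is `(α - 1) P`), since
inversion is antitone. The antitonicity is proved directly: if `A u = eᵢ` and `B v = eᵢ`, then
expanding `0 ≤ (u - α v)ᵀ B (u - α v)` gives `0 ≤ uᵀ B u - 2 α uᵢ + α² vᵢ`,
while `uᵀ B u ≤ α uᵀ A u = α uᵢ`.
-/

open Matrix

/-- Antitonicity, on diagonal entries, of inversion. For invertible `A` and `B`, the vectors `u` and `v` are the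
`i`-th columns of `A⁻¹` and `B⁻¹`, and the conclusion reads `(A⁻¹) i i ≤ α * (B⁻¹) i i`. The
hypotheses `hu` and `hv` avoid inverses, so invertibility is not needed. -/
lemma apply_le_mul_apply_of_mulVec_eq_single {N : ℕ} {A B : Matrix (Fin N) (Fin N) ℝ} {α : ℝ}
    (hB : B.PosSemidef) (hAB : (α • A - B).PosSemidef) (hα : 0 < α) {i : Fin N}
    {u v : Fin N → ℝ} (hu : A *ᵥ u = Pi.single i 1) (hv : B *ᵥ v = Pi.single i 1) :
    u i ≤ α * v i := by
  have h₁ : 0 ≤ (u - α • v) ⬝ᵥ (B *ᵥ (u - α • v)) := by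
    simpa using hB.dotProduct_mulVec_nonneg (u - α • v)
  have h₂ : 0 ≤ u ⬝ᵥ ((α • A - B) *ᵥ u) := by
    simpa using hAB.dotProduct_mulVec_nonneg u
  have hBT : Bᵀ = B := by simpa using hB.isHermitian.eq
  have h₃ : v ⬝ᵥ (B *ᵥ u) = u i := by
    rw [dotProduct_mulVec, ← mulVec_transpose, hBT, hv]
    simp
  rw [sub_mulVec, smul_mulVec, hu, dotProduct_sub, dotProduct_smul, dotProduct_single_one] at h₂
  rw [mulVec_sub, mulVec_smul, hv, sub_dotProduct, smul_dotProduct, dotProduct_sub,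
    dotProduct_sub, h₃, dotProduct_smul, dotProduct_smul, dotProduct_single_one,
    dotProduct_single_one] at h₁
  simp only [smul_eq_mul] at h₁ h₂
  have h₄ : 0 ≤ α * (α * v i - u i) := by linarith
  linarith [nonneg_of_mul_nonneg_right h₄ hα]

/-- **Subhomogeneity of the GEC second-order update map (property (iii) in
the proof of Theorem 5(b)).**  Let `P` be symmetric positive semidefinite and
`γ > 0` componentwise.  Then for every scalar `α > 1`,
`G(αγ) ≤ α G(γ)` componentwise. -/
theorem gecG_subhomogeneous
    (N : ℕ)
    (P : Matrix (Fin N) (Fin N) ℝ) (hP : P.PosSemidef)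
    (γ : Fin N → ℝ) (hγ : ∀ n, 0 < γ n)
    (α : ℝ) (hα : 1 < α) :
    ∀ i, gecG P (α • γ) i ≤ α * gecG P γ i := by
  intro i
  have hα₀ : 0 < α := by linarith
  have hA : (P + diagonal γ).PosDef := PosDef.posSemidef_add hP (PosDef.diagonal hγ)
  have hB : (P + diagonal (α • γ)).PosDef :=
    PosDef.posSemidef_add hP (PosDef.diagonal fun n => mul_pos hα₀ (hγ n))
  have hAB : (α • (P + diagonal γ) - (P + diagonal (α • γ))).PosSemidef := by
    have h : α • (P + diagonal γ) - (P + diagonal (α • γ)) = (α - 1) • P := by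
      rw [diagonal_smul, smul_add, sub_smul, one_smul]
      abel
    rw [h]
    exact hP.smul (by linarith)
  have col {M : Matrix (Fin N) (Fin N) ℝ} (hM : M.PosDef) :
      M *ᵥ (M⁻¹ *ᵥ Pi.single i 1) = Pi.single i 1 := by
    rw [mulVec_mulVec, mul_nonsing_inv _ ((isUnit_iff_isUnit_det M).mp hM.isUnit), one_mulVec]
  have key := apply_le_mul_apply_of_mulVec_eq_single hB.posSemidef hAB hα₀ (col hA) (col hB)
  simp only [mulVec_single_one, col_apply] at key
  have : Nonempty (Fin N) := ⟨i⟩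
  have ha := hA.inv.diag_pos (i := i)
  have hb := hB.inv.diag_pos (i := i)
  have hinv : ((P + diagonal (α • γ))⁻¹ i i)⁻¹ ≤ α * ((P + diagonal γ)⁻¹ i i)⁻¹ := by
    rw [← div_eq_mul_inv, le_div_iff₀ ha, inv_mul_le_iff₀ hb]
    linarith
  simp only [gecG, Pi.smul_apply, smul_eq_mul]
  linarith
end
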